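/- arXiv:2510.16839 — 3 statements merged into one kernel-verified Lean document; each statement's English description precedes it below -/
import Mathlib

section
/- Let Γ be a digraphon on a probability space (Ω,μ). Then there exists a finite or countable index set I not containing 0 and a measurable partition Ω = X₀ ⊔ ⨆_{i∈I} X_i such that X₀ is either a null/empty set or is fragmented in Γ, and each X_i (i ∈ I) is a strong component in Γ. -/
/-!
The union of countably many strongly connected sets sharing a set of positive measure is strongly
connected: both sides of a cut of the union carry mass in one common member of the family, so
already inside that member the cut has positive weight. By exhaustion, every strongly connected set
therefore lies in a strong component. Components have positive measure, so a maximal pairwise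
disjoint family of them is countable, and a strongly connected set outside its union would lie in a
component meeting that union in a null set; removing this null set gives a further disjoint
component and contradicts maximality.
-/

open MeasureTheory Filter Set Topology
open scoped ENNReal Real

namespace Digraphon

variable {Ω : Type*} [MeasurableSpace Ω]

/-- `kpowAux μ Γ n` is the `(n+1)`-st kernel power of `Γ`. -/
noncomputable def kpowAux (μ : Measure Ω) (Γ : Ω → Ω → ℝ) : ℕ → Ω → Ω → ℝ
  | 0 => Γ
  | n + 1 => fun x y => ∫ z, Γ x z * kpowAux μ Γ n z y ∂μ

/-- `dpow μ Γ k` is the `k`-th kernel power of `Γ` (intended for `k ≥ 1`). -/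
noncomputable def dpow (μ : Measure Ω) (Γ : Ω → Ω → ℝ) (k : ℕ) : Ω → Ω → ℝ :=
  kpowAux μ Γ (k - 1)

noncomputable def kpowAuxC (μ : Measure Ω) (Γ : Ω → Ω → ℂ) : ℕ → Ω → Ω → ℂ
  | 0 => Γ
  | n + 1 => fun x y => ∫ z, Γ x z * kpowAuxC μ Γ n z y ∂μ

noncomputable def dpowC (μ : Measure Ω) (Γ : Ω → Ω → ℂ) (k : ℕ) : Ω → Ω → ℂ :=
  kpowAuxC μ Γ (k - 1)

/-- The set of points reachable from `x`. -/
def ReachOut (μ : Measure Ω) (Γ : Ω → Ω → ℝ) (x : Ω) : Set Ω :=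
  {z | ∃ k : ℕ, 1 ≤ k ∧ 0 < dpow μ Γ k x z}

/-- The reachability sequence from `x` to `y`. -/
def reachSeq (μ : Measure Ω) (Γ : Ω → Ω → ℝ) (x y : Ω) : Set ℕ :=
  {k : ℕ | 1 ≤ k ∧ 0 < dpow μ Γ k x y}

/-- A digraphon: a measurable kernel with values in `[0,1]`. -/
def IsDigraphon (Γ : Ω → Ω → ℝ) : Prop :=
  Measurable (Function.uncurry Γ) ∧ ∀ x y, Γ x y ∈ Set.Icc (0 : ℝ) 1

/-- `X` is strongly connected in `Γ`. -/
def StronglyConnectedIn (μ : Measure Ω) (Γ : Ω → Ω → ℝ) (X : Set Ω) : Prop :=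
  MeasurableSet X ∧ 0 < μ X ∧
    ∀ A B : Set Ω, MeasurableSet A → MeasurableSet B → A ∪ B = X → Disjoint A B →
      0 < μ A → 0 < μ B → 0 < ∫ x in A, ∫ y in B, Γ x y ∂μ ∂μ

/-- `X` is a strong component in `Γ`. -/
def StrongComponent (μ : Measure Ω) (Γ : Ω → Ω → ℝ) (X : Set Ω) : Prop :=
  StronglyConnectedIn μ Γ X ∧
    ∀ Y : Set Ω, MeasurableSet Y → 0 < μ (X ∩ Y) → 0 < μ (Y \ X) →
      ¬ StronglyConnectedIn μ Γ Y

/-- `X` is fragmented in `Γ`. -/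
def Fragmented (μ : Measure Ω) (Γ : Ω → Ω → ℝ) (X : Set Ω) : Prop :=
  ∀ Y : Set Ω, Y ⊆ X → MeasurableSet Y → ¬ StronglyConnectedIn μ Γ Y

/-- `τ` is an eigenvalue of the integral kernel operator of `Γ` on `L²(Ω;ℂ)`. -/
def IsEigenvalue (μ : Measure Ω) (Γ : Ω → Ω → ℝ) (τ : ℂ) : Prop :=
  ∃ f : Ω → ℂ, MemLp f 2 μ ∧ ¬(f =ᵐ[μ] 0) ∧
    ∀ᵐ x ∂μ, ∫ y, f y * (Γ y x : ℂ) ∂μ = τ * f x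

/-- The spectral radius of `Γ` (`0` if there are no eigenvalues). -/
noncomputable def specRad (μ : Measure Ω) (Γ : Ω → Ω → ℝ) : ℝ :=
  sSup (insert 0 {r : ℝ | ∃ τ : ℂ, IsEigenvalue μ Γ τ ∧ ‖τ‖ = r})

/-- The number of eigenvalues of modulus `specRad μ Γ`. -/
noncomputable def periphMult (μ : Measure Ω) (Γ : Ω → Ω → ℝ) : ℕ :=
  {τ : ℂ | IsEigenvalue μ Γ τ ∧ ‖τ‖ = specRad μ Γ}.ncard

/-- `P : ZMod d → Set Ω` witnesses graphical `d`-periodicity of `Γ`. -/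
def IsPeriodicityWitness (μ : Measure Ω) (Γ : Ω → Ω → ℝ) {d : ℕ} (P : ZMod d → Set Ω) : Prop :=
  (∀ j, MeasurableSet (P j)) ∧ Pairwise (Function.onFun Disjoint P) ∧ (⋃ j, P j) = Set.univ ∧
    ∀ j : ZMod d, (μ.prod μ) {p : Ω × Ω | p.1 ∈ P j ∧ p.2 ∉ P (j + 1) ∧ Γ p.1 p.2 ≠ 0} = 0

/-- `Γ` is graphically `d`-periodic. -/
def GraphPeriodic (μ : Measure Ω) (Γ : Ω → Ω → ℝ) (d : ℕ) : Prop :=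
  ∃ P : ZMod d → Set Ω, IsPeriodicityWitness μ Γ P

/-- `Γ` is aperiodic. -/
def Aperiodic (μ : Measure Ω) (Γ : Ω → Ω → ℝ) : Prop :=
  ∀ d : ℕ, 1 ≤ d → GraphPeriodic μ Γ d → d = 1

/-- `S ⊆ ℕ` is eventually `D`-periodic with shift `s`. -/
def EvPeriodic (D : ℕ) (s : ℤ) (S : Set ℕ) : Prop :=
  (∀ n ∈ S, (D : ℤ) ∣ ((n : ℤ) - s)) ∧
    ∃ k : ℕ, ∀ n : ℕ, k ≤ n → (((D : ℤ) ∣ ((n : ℤ) - s)) ↔ n ∈ S)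

/-- The homomorphism density `t(C_k, Γ)` of the directed `k`-cycle. -/
noncomputable def cycleDensity (μ : Measure Ω) (Γ : Ω → Ω → ℝ) (k : ℕ) : ℝ :=
  ∫ x : Fin k → Ω, ∏ i : Fin k, Γ (x i) (x (finRotate k i)) ∂(Measure.pi fun _ => μ)

/-- `Γ⟦A⟧` : the kernel equal to `Γ` on `A × A` and `0` elsewhere. -/
noncomputable def kerRestrict (Γ : Ω → Ω → ℝ) (A : Set Ω) : Ω → Ω → ℝ :=
  fun x y => (A ×ˢ A).indicator (Function.uncurry Γ) (x, y)

/-- Equality of sets modulo a `μ`-nullset. -/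
def AEEqSet (μ : Measure Ω) (A B : Set Ω) : Prop := μ ((A \ B) ∪ (B \ A)) = 0

/-- The normalized restriction of `μ` to `A`, as a measure on `↥A`. -/
noncomputable def subMeasure (μ : Measure Ω) (A : Set Ω) : Measure ↥A :=
  (μ A)⁻¹ • Measure.comap Subtype.val μ

/-- The restriction of a kernel to `A × A`, as a kernel on `↥A`. -/
def subKernel (Γ : Ω → Ω → ℝ) (A : Set Ω) : ↥A → ↥A → ℝ :=
  fun a b => Γ ↑a ↑b

/-- A finite oriented graph: no pair of antiparallel edges (in particular no loops). -/
structure OrientedGraph where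
  n : ℕ
  E : Finset (Fin n × Fin n)
  no_anti : ∀ e ∈ E, (e.2, e.1) ∉ E

/-- The homomorphism density `t(D, Γ)` of an oriented graph `D`. -/
noncomputable def homDensity (μ : Measure Ω) (Γ : Ω → Ω → ℝ) (D : OrientedGraph) : ℝ :=
  ∫ x : Fin D.n → Ω, ∏ e ∈ D.E, Γ (x e.1) (x e.2) ∂(Measure.pi fun _ => μ)

/-- The cut norm distance of two kernels. -/
noncomputable def cutNormDist (μ : Measure Ω) (U W : Ω → Ω → ℝ) : ℝ :=
  sSup {r : ℝ | ∃ S T : Set Ω, MeasurableSet S ∧ MeasurableSet T ∧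
    r = |∫ x in S, ∫ y in T, (U x y - W x y) ∂μ ∂μ|}

/-- The cut distance of two kernels. -/
noncomputable def cutDist (μ : Measure Ω) (U W : Ω → Ω → ℝ) : ℝ :=
  sInf {r : ℝ | ∃ e : Ω ≃ᵐ Ω, MeasurePreserving e μ μ ∧
    r = cutNormDist μ U (fun x y => W (e x) (e y))}

lemma exists_measure_maximal_of_iUnion_mem (μ : Measure Ω) {C : Set (Set Ω)} (hne : C.Nonempty)
    (hC : ∀ s : ℕ → Set Ω, (∀ n, s n ∈ C) → ⋃ n, s n ∈ C) :
    ∃ s ∈ C, ∀ t ∈ C, μ t ≤ μ s := by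
  obtain ⟨u, -, hu, huC⟩ := exists_seq_tendsto_sSup (hne.image μ) (OrderTop.bddAbove _)
  choose s hsC hsu using huC
  refine ⟨⋃ n, s n, hC s hsC, fun t ht => (le_sSup (mem_image_of_mem μ ht)).trans ?_⟩
  exact le_of_tendsto' hu fun n => hsu n ▸ measure_mono (subset_iUnion s n)

lemma exists_ae_maximum_of_iUnion_mem (μ : Measure Ω) [SFinite μ] {C : Set (Set Ω)}
    (hne : C.Nonempty) (hmeas : ∀ s ∈ C, NullMeasurableSet s μ)
    (hC : ∀ s : ℕ → Set Ω, (∀ n, s n ∈ C) → ⋃ n, s n ∈ C) :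
    ∃ s ∈ C, ∀ t ∈ C, t ≤ᵐ[μ] s := by
  obtain ⟨ν, _, hμν, hνμ⟩ := exists_isFiniteMeasure_absolutelyContinuous μ
  obtain ⟨s, hs, hmax⟩ := exists_measure_maximal_of_iUnion_mem ν hne hC
  refine ⟨s, hs, fun t ht => ?_⟩
  have hst : s ∪ t ∈ C := by
    have hseq := hC (fun | 0 => s | _ + 1 => t) (fun n => by cases n <;> assumption)
    rwa [← union_iUnion_nat_succ, iUnion_const] at hseq
  have heq : s =ᵐ[ν] (s ∪ t : Set Ω) :=
    ae_eq_of_subset_of_measure_ge subset_union_left (hmax _ hst) ((hmeas s hs).mono_ac hνμ)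
      (measure_ne_top ν _)
  exact (subset_union_right.eventuallyLE.trans heq.symm.le).filter_mono hμν.ae_le

lemma exists_nat_bijOn_of_countable {α : Type*} {F : Set α} (hF : F.Countable) (c : α) :
    ∃ (I : Set ℕ) (X : ℕ → α), 0 ∉ I ∧ X 0 = c ∧ BijOn X I F := by
  obtain ⟨f, hf⟩ := countable_iff_exists_injOn.1 hF
  let g : α → ℕ := fun a => f a + 1
  have hg : InjOn g F := (add_left_injective 1).comp_injOn hf
  have h0 : 0 ∉ g '' F := by
    rintro ⟨a, -, ha⟩
    exact Nat.succ_ne_zero _ ha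
  have : Nonempty α := ⟨c⟩
  have hinv : BijOn (Function.invFunOn g F) (g '' F) F :=
    hg.bijOn_image.symm hg.bijOn_image.invOn_invFunOn.symm
  refine ⟨g '' F, Function.update (Function.invFunOn g F) 0 c, h0, Function.update_self .., ?_⟩
  exact hinv.congr fun i hi => (Function.update_of_ne (ne_of_mem_of_not_mem hi h0) _ _).symm

lemma countable_of_pairwiseDisjoint_of_measure_pos {μ : Measure Ω} [SFinite μ] {F : Set (Set Ω)}
    (hmeas : ∀ s ∈ F, NullMeasurableSet s μ) (hpos : ∀ s ∈ F, 0 < μ s)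
    (hF : F.PairwiseDisjoint id) : F.Countable := by
  have hcount : {s : F | 0 < μ (s : Set Ω)}.Countable :=
    Measure.countable_meas_pos_of_disjoint_iUnion₀ (fun s : F => hmeas s s.2)
      fun s t hst => (hF s.2 t.2 (Subtype.coe_ne_coe.2 hst)).aedisjoint
  have huniv : {s : F | 0 < μ (s : Set Ω)} = univ := eq_univ_of_forall fun s => hpos s s.2
  rwa [huniv, countable_univ_iff] at hcount

lemma setIntegral_setIntegral_mono {α β : Type*} [MeasurableSpace α] [MeasurableSpace β]
    {μ : Measure α} {ν : Measure β} [SFinite μ] [SFinite ν] {f : α → β → ℝ}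
    (hf₀ : 0 ≤ᵐ[μ.prod ν] Function.uncurry f) (hf : Integrable (Function.uncurry f) (μ.prod ν))
    {A A' : Set α} {B B' : Set β} (hA : A ⊆ A') (hB : B ⊆ B') :
    ∫ x in A, ∫ y in B, f x y ∂ν ∂μ ≤ ∫ x in A', ∫ y in B', f x y ∂ν ∂μ :=
  calc ∫ x in A, ∫ y in B, f x y ∂ν ∂μ
      = ∫ z in A ×ˢ B, Function.uncurry f z ∂μ.prod ν := (setIntegral_prod _ hf.integrableOn).symm
    _ ≤ ∫ z in A' ×ˢ B', Function.uncurry f z ∂μ.prod ν :=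
      setIntegral_mono_set hf.integrableOn (ae_restrict_of_ae hf₀)
        (prod_mono hA hB).eventuallyLE
    _ = ∫ x in A', ∫ y in B', f x y ∂ν ∂μ := setIntegral_prod _ hf.integrableOn

lemma IsDigraphon.integrable {μ : Measure Ω} [IsFiniteMeasure μ] {Γ : Ω → Ω → ℝ}
    (hΓ : IsDigraphon Γ) : Integrable (Function.uncurry Γ) (μ.prod μ) :=
  .of_mem_Icc 0 1 hΓ.1.aemeasurable (ae_of_all _ fun p => hΓ.2 p.1 p.2)

section AECongr

variable {μ : Measure Ω} {Γ : Ω → Ω → ℝ} {X X' : Set Ω}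

lemma StronglyConnectedIn.congr_ae (hX : StronglyConnectedIn μ Γ X) (hX' : MeasurableSet X')
    (hXX' : X =ᵐ[μ] X') : StronglyConnectedIn μ Γ X' := by
  refine ⟨hX', measure_congr hXX' ▸ hX.2.1, fun A B _ hB hAB hdisj hA₀ hB₀ => ?_⟩
  have hA' : (X \ B : Set Ω) =ᵐ[μ] A := by
    have hXB : X' \ B = A := by rw [← hAB, union_sdiff_right, hdisj.sdiff_eq_left]
    exact (ae_eq_set_sdiff hXX' .rfl).trans (.of_eq hXB)
  have hB' : (X ∩ B : Set Ω) =ᵐ[μ] B := by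
    have hXB : X' ∩ B = B := inter_eq_right.2 (hAB ▸ subset_union_right)
    exact (ae_eq_set_inter hXX' .rfl).trans (.of_eq hXB)
  have hpos := hX.2.2 (X \ B) (X ∩ B) (hX.1.diff hB) (hX.1.inter hB) (sdiff_union_inter X B)
    disjoint_sdiff_inter ((measure_congr hA').symm ▸ hA₀) ((measure_congr hB').symm ▸ hB₀)
  simpa only [setIntegral_congr_set hA', setIntegral_congr_set hB'] using hpos

lemma StrongComponent.congr_ae (hX : StrongComponent μ Γ X) (hX' : MeasurableSet X')
    (hXX' : X =ᵐ[μ] X') : StrongComponent μ Γ X' := by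
  refine ⟨hX.1.congr_ae hX' hXX', fun Y hY hmeet hdiff => hX.2 Y hY ?_ ?_⟩
  · exact hmeet.trans_eq (measure_congr (ae_eq_set_inter hXX' (ae_eq_refl Y))).symm
  · exact hdiff.trans_eq (measure_congr (ae_eq_set_sdiff (ae_eq_refl Y) hXX')).symm

end AECongr

section Components

variable {μ : Measure Ω} [SFinite μ] {Γ : Ω → Ω → ℝ}
  (hΓ₀ : 0 ≤ᵐ[μ.prod μ] Function.uncurry Γ) (hΓ : Integrable (Function.uncurry Γ) (μ.prod μ))

include hΓ₀ hΓ

lemma StronglyConnectedIn.setIntegral_pos {X A B : Set Ω} (hX : StronglyConnectedIn μ Γ X)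
    (hA : MeasurableSet A) (hB : MeasurableSet B) (hXAB : X ⊆ A ∪ B) (hAB : Disjoint A B)
    (hA₀ : 0 < μ (A ∩ X)) (hB₀ : 0 < μ (B ∩ X)) : 0 < ∫ x in A, ∫ y in B, Γ x y ∂μ ∂μ := by
  have hcover : A ∩ X ∪ B ∩ X = X := by rw [← union_inter_distrib_right, inter_eq_right.2 hXAB]
  calc 0 < ∫ x in A ∩ X, ∫ y in B ∩ X, Γ x y ∂μ ∂μ :=
        hX.2.2 _ _ (hA.inter hX.1) (hB.inter hX.1) hcover
          (hAB.mono inter_subset_left inter_subset_left) hA₀ hB₀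
    _ ≤ _ := setIntegral_setIntegral_mono hΓ₀ hΓ inter_subset_left inter_subset_left

lemma StronglyConnectedIn.iUnion {ι : Type*} [Countable ι] [Nonempty ι] {S : Set Ω} {Y : ι → Set Ω}
    (hS : 0 < μ S) (hSY : ∀ i, S ⊆ Y i) (hY : ∀ i, StronglyConnectedIn μ Γ (Y i)) :
    StronglyConnectedIn μ Γ (⋃ i, Y i) := by
  have hSU : S ⊆ ⋃ i, Y i := subset_iUnion_of_subset (Classical.arbitrary ι) (hSY _)
  refine ⟨.iUnion fun i => (hY i).1, hS.trans_le (measure_mono hSU), ?_⟩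
  intro A B hA hB hAB hdisj hA₀ hB₀
  have exists_member {C : Set Ω} (hC : C ⊆ ⋃ i, Y i) (hC₀ : 0 < μ C) : ∃ i, 0 < μ (C ∩ Y i) := by
    refine exists_measure_pos_of_not_measure_iUnion_null ?_
    rw [← inter_iUnion, inter_eq_left.2 hC]
    exact hC₀.ne'
  have core_le (C : Set Ω) (i : ι) : μ (C ∩ S) ≤ μ (C ∩ Y i) :=
    measure_mono (inter_subset_inter_right C (hSY i))
  obtain ⟨i, hAi, hBi⟩ : ∃ i, 0 < μ (A ∩ Y i) ∧ 0 < μ (B ∩ Y i) := by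
    have hcore : 0 < μ (A ∩ S) ∨ 0 < μ (B ∩ S) := by
      by_contra! h
      have hcover : A ∩ S ∪ B ∩ S = S := by
        rw [← union_inter_distrib_right, hAB, inter_eq_right.2 hSU]
      exact hS.ne' (hcover ▸ measure_union_null (nonpos_iff_eq_zero.1 h.1)
        (nonpos_iff_eq_zero.1 h.2))
    rcases hcore with hAS | hBS
    · obtain ⟨i, hi⟩ := exists_member (hAB ▸ subset_union_right) hB₀
      exact ⟨i, hAS.trans_le (core_le A i), hi⟩
    · obtain ⟨i, hi⟩ := exists_member (hAB ▸ subset_union_left) hA₀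
      exact ⟨i, hi, hBS.trans_le (core_le B i)⟩
  exact (hY i).setIntegral_pos hΓ₀ hΓ hA hB (hAB ▸ subset_iUnion Y i) hdisj hAi hBi

lemma StronglyConnectedIn.union {X Y : Set Ω} (hX : StronglyConnectedIn μ Γ X)
    (hY : StronglyConnectedIn μ Γ Y) (hXY : 0 < μ (X ∩ Y)) :
    StronglyConnectedIn μ Γ (X ∪ Y) := by
  rw [union_eq_iUnion]
  exact .iUnion hΓ₀ hΓ hXY (Bool.forall_bool.2 ⟨inter_subset_right, inter_subset_left⟩)
    (Bool.forall_bool.2 ⟨hY, hX⟩)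

lemma StronglyConnectedIn.exists_strongComponent_superset {S : Set Ω}
    (hS : StronglyConnectedIn μ Γ S) : ∃ X, S ⊆ X ∧ StrongComponent μ Γ X := by
  obtain ⟨X, ⟨hX, hSX⟩, hmax⟩ := exists_ae_maximum_of_iUnion_mem μ
    (C := {Y | StronglyConnectedIn μ Γ Y ∧ S ⊆ Y}) ⟨S, hS, Subset.rfl⟩
    (fun Y hY => hY.1.1.nullMeasurableSet)
    fun Y hY => ⟨.iUnion hΓ₀ hΓ hS.2.1 (fun n => (hY n).2) fun n => (hY n).1,
      subset_iUnion_of_subset 0 (hY 0).2⟩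
  refine ⟨X, hSX, hX, fun Y _ hmeet hdiff hY => hdiff.ne' ?_⟩
  have hle : (X ∪ Y : Set Ω) ≤ᵐ[μ] X :=
    hmax _ ⟨hX.union hΓ₀ hΓ hY hmeet, hSX.trans subset_union_left⟩
  rwa [ae_le_set, union_sdiff_left] at hle

lemma StronglyConnectedIn.exists_strongComponent_disjoint {F : Set (Set Ω)} {S : Set Ω}
    (hcount : F.Countable) (hF : ∀ X ∈ F, StrongComponent μ Γ X)
    (hS : StronglyConnectedIn μ Γ S) (hSF : Disjoint S (⋃₀ F)) :
    ∃ X, StrongComponent μ Γ X ∧ Disjoint X (⋃₀ F) := by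
  obtain ⟨Z, hSZ, hZ⟩ := hS.exists_strongComponent_superset hΓ₀ hΓ
  have hnull : μ (Z ∩ ⋃₀ F) = 0 := by
    rw [inter_comm, sUnion_eq_biUnion, iUnion₂_inter]
    refine (measure_biUnion_null_iff hcount).2 fun X hX => by_contra fun hmeet => ?_
    have hdiff : S ⊆ Z \ X := subset_sdiff.2 ⟨hSZ, hSF.mono_right (subset_sUnion_of_mem hX)⟩
    exact (hF X hX).2 Z hZ.1.1 (pos_iff_ne_zero.2 hmeet)
      (hS.2.1.trans_le (measure_mono hdiff)) hZ.1
  have hU : MeasurableSet (⋃₀ F) := .sUnion hcount fun X hX => (hF X hX).1.1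
  refine ⟨Z \ ⋃₀ F, hZ.congr_ae (hZ.1.1.diff hU) ?_, disjoint_sdiff_left⟩
  rw [← sdiff_self_inter]
  exact (sdiff_null_ae_eq_self hnull).symm

lemma exists_countable_strongComponents_fragmented_compl :
    ∃ F : Set (Set Ω), F.Countable ∧ F.PairwiseDisjoint id ∧
      (∀ X ∈ F, StrongComponent μ Γ X) ∧ Fragmented μ Γ (⋃₀ F)ᶜ := by
  obtain ⟨F, hmax⟩ := zorn_subset
    {F : Set (Set Ω) | (∀ X ∈ F, StrongComponent μ Γ X) ∧ F.PairwiseDisjoint id}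
    fun c hc hchain => ⟨⋃₀ c,
      ⟨fun X ⟨G, hG, hXG⟩ => (hc hG).1 X hXG,
        (pairwiseDisjoint_sUnion hchain.directedOn).2 fun G hG => (hc hG).2⟩,
      fun _ => subset_sUnion_of_mem⟩
  obtain ⟨hF, hdisj⟩ := hmax.prop
  have hcount : F.Countable := countable_of_pairwiseDisjoint_of_measure_pos
    (fun X hX => (hF X hX).1.1.nullMeasurableSet) (fun X hX => (hF X hX).1.2.1) hdisj
  refine ⟨F, hcount, hdisj, hF, fun S hSF _ hS => ?_⟩
  obtain ⟨X, hX, hXF⟩ :=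
    hS.exists_strongComponent_disjoint hΓ₀ hΓ hcount hF (subset_compl_iff_disjoint_right.1 hSF)
  have hmem : X ∈ F := hmax.mem_of_prop_insert
    ⟨forall_mem_insert.2 ⟨hX, hF⟩,
      hdisj.insert fun Y hY _ => hXF.mono_right (subset_sUnion_of_mem hY)⟩
  have hempty : X = ∅ := disjoint_self.1 (hXF.mono_right (subset_sUnion_of_mem hmem))
  exact hX.1.2.1.ne' (hempty ▸ measure_empty)

end Components

theorem decomposition_into_strong_components_exists_general (μ : Measure Ω) [SFinite μ]
    (Γ : Ω → Ω → ℝ) (hΓ₀ : 0 ≤ᵐ[μ.prod μ] Function.uncurry Γ)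
    (hΓ : Integrable (Function.uncurry Γ) (μ.prod μ)) :
    ∃ (I : Set ℕ) (X : ℕ → Set Ω), 0 ∉ I ∧
      (∀ i ∈ insert 0 I, MeasurableSet (X i)) ∧
      (insert 0 I).PairwiseDisjoint X ∧
      (⋃ i ∈ insert 0 I, X i) = Set.univ ∧
      Fragmented μ Γ (X 0) ∧
      (∀ i ∈ I, StrongComponent μ Γ (X i)) := by
  obtain ⟨F, hcount, hdisj, hF, hfrag⟩ := exists_countable_strongComponents_fragmented_compl hΓ₀ hΓ
  obtain ⟨I, X, h0I, hX0, hXI⟩ := exists_nat_bijOn_of_countable hcount (⋃₀ F)ᶜ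
  have hU : (⋃ i ∈ I, X i) = ⋃₀ F := by rw [← hXI.image_eq, sUnion_image]
  have hcomp : ∀ i ∈ I, StrongComponent μ Γ (X i) := fun i hi => hF _ (hXI.mapsTo hi)
  have hmeas : MeasurableSet (⋃₀ F) := .sUnion hcount fun Y hY => (hF Y hY).1.1
  refine ⟨I, X, h0I, forall_mem_insert.2 ⟨hX0 ▸ hmeas.compl, fun i hi => (hcomp i hi).1.1⟩,
    (pairwiseDisjoint_insert_of_notMem h0I).2 ⟨?_, fun i hi => ?_⟩, ?_, hX0 ▸ hfrag, hcomp⟩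
  · exact hXI.injOn.pairwiseDisjoint_image.1 (hXI.image_eq.symm ▸ hdisj)
  · exact hX0 ▸ disjoint_compl_left.mono_right (subset_sUnion_of_mem (hXI.mapsTo hi))
  · rw [biUnion_insert, hX0, hU, compl_union_self]

/-- Existence of the decomposition of a digraphon into strong components
and a fragmented (or null) set. -/
theorem decomposition_into_strong_components_exists
    {Ω : Type*} [MeasurableSpace Ω] (μ : Measure Ω) [IsProbabilityMeasure μ]
    (Γ : Ω → Ω → ℝ) (hΓ : IsDigraphon Γ) :
    ∃ (I : Set ℕ) (X : ℕ → Set Ω), 0 ∉ I ∧ I.Countable ∧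
      (∀ i ∈ insert 0 I, MeasurableSet (X i)) ∧
      (insert 0 I).PairwiseDisjoint X ∧
      (⋃ i ∈ insert 0 I, X i) = Set.univ ∧
      (μ (X 0) = 0 ∨ Fragmented μ Γ (X 0)) ∧
      (∀ i ∈ I, StrongComponent μ Γ (X i)) := by
  obtain ⟨I, X, h0I, hmeas, hdisj, hcover, hfrag, hcomp⟩ :=
    decomposition_into_strong_components_exists_general μ Γ
      (ae_of_all _ fun p => (hΓ.2 p.1 p.2).1) hΓ.integrable
  exact ⟨I, X, h0I, I.to_countable, hmeas, hdisj, hcover, .inr hfrag, hcomp⟩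

end Digraphon
end

section
/- Let Γ be a digraphon on a probability space (Ω,μ). If {X_i}_{i∈I∪{0}} and {X'_i}_{i∈I'∪{0}} are two measurable partitions of Ω such that in each, the part indexed by 0 is fragmented in Γ (or null) and every other part is a strong component in Γ, then there exists a bijection π : I → I' such that X'_{π(i)} equals X_i up to a μ-null set for every i ∈ I, and X₀ equals X'₀ up to a μ-null set. -/
open MeasureTheory Filter Set Topology
open scoped ENNReal Real

namespace Digraphon

variable {Ω : Type*} [MeasurableSpace Ω]

/-!
Two strong components that meet in positive measure agree up to a null set, by maximality of each.
A strongly connected set stays strongly connected after removing a null set, so a strong component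
of the first decomposition cannot lie, up to a null set, inside the fragmented part of the second:
it meets some component of the second in positive measure, and hence agrees with it. Disjointness
and positivity of measure make this correspondence a bijection, and the fragmented parts agree as
complements of the unions.
-/

section Uniqueness

variable {μ : Measure Ω} {Γ : Ω → Ω → ℝ}

theorem aeEqSet_iff_ae_eq {A B : Set Ω} : AEEqSet μ A B ↔ A =ᵐ[μ] B :=
  measure_symmDiff_eq_zero_iff

theorem StronglyConnectedIn.sdiff_of_aedisjoint {X N : Set Ω} (hX : StronglyConnectedIn μ Γ X)
    (hN : MeasurableSet N) (hXN : AEDisjoint μ X N) : StronglyConnectedIn μ Γ (X \ N) := by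
  obtain ⟨hX_meas, hX_pos, hX_cut⟩ := hX
  refine ⟨hX_meas.diff hN, by rwa [hXN.measure_sdiff_left], ?_⟩
  intro A B hA hB hAB hAB_disj hA_pos hB_pos
  -- A cut of `X \ N` becomes a cut of `X` by adding the null set `X ∩ N` to one side.
  have h_union : (A ∪ X ∩ N) ∪ B = X := by rw [union_right_comm, hAB, sdiff_union_inter]
  have h_disj : Disjoint (A ∪ X ∩ N) B :=
    hAB_disj.union_left <| disjoint_sdiff_inter.symm.mono_right (hAB ▸ subset_union_right)
  have h_ae : (A ∪ X ∩ N : Set Ω) =ᵐ[μ] A :=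
    union_ae_eq_left_of_ae_eq_empty (ae_eq_empty.2 hXN)
  have h_cut := hX_cut (A ∪ X ∩ N) B (hA.union (hX_meas.inter hN)) hB h_union h_disj
    (hA_pos.trans_le (measure_mono subset_union_left)) hB_pos
  rwa [setIntegral_congr_set h_ae] at h_cut

theorem Fragmented.of_measure_eq_zero {X : Set Ω} (hX : μ X = 0) : Fragmented μ Γ X :=
  fun _ hYX _ hY => hY.2.1.ne' (measure_mono_null hYX hX)

theorem StrongComponent.ae_le_of_not_aedisjoint {X Y : Set Ω} (hX : StrongComponent μ Γ X)
    (hY : StronglyConnectedIn μ Γ Y) (hXY : ¬ AEDisjoint μ X Y) : Y ≤ᵐ[μ] X := by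
  refine ae_le_set.2 (by_contra fun h_diff => ?_)
  exact hX.2 Y hY.1 (pos_iff_ne_zero.2 hXY) (pos_iff_ne_zero.2 h_diff) hY

theorem StrongComponent.ae_eq_of_not_aedisjoint {X Y : Set Ω} (hX : StrongComponent μ Γ X)
    (hY : StrongComponent μ Γ Y) (hXY : ¬ AEDisjoint μ X Y) : X =ᵐ[μ] Y :=
  (hY.ae_le_of_not_aedisjoint hX.1 fun h => hXY h.symm).antisymm
    (hX.ae_le_of_not_aedisjoint hY.1 hXY)

theorem StronglyConnectedIn.exists_not_aedisjoint {ι : Type*} [Countable ι] {S : Set Ω}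
    {X : ι → Set Ω} (hS : StronglyConnectedIn μ Γ S) (hX : ∀ i, MeasurableSet (X i))
    (h_frag : Fragmented μ Γ (⋃ i, X i)ᶜ) : ∃ i, ¬ AEDisjoint μ S (X i) := by
  by_contra! h_disj
  have h_rest : StronglyConnectedIn μ Γ (S \ ⋃ i, X i) :=
    hS.sdiff_of_aedisjoint (.iUnion hX) (AEDisjoint.iUnion_right_iff.2 h_disj)
  exact h_frag _ (sdiff_subset_compl _ _) h_rest.1 h_rest

/-- A decomposition of `Γ` into strong components: the sets `X i` are pairwise disjoint strong
components, and the rest `X₀` of the space is fragmented. A null `X₀` is fragmented, so the case of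
a null part `X₀` is included. -/
structure IsStrongDecomposition {ι : Type*} (μ : Measure Ω) (Γ : Ω → Ω → ℝ) (X₀ : Set Ω)
    (X : ι → Set Ω) : Prop where
  compl_iUnion : (⋃ i, X i)ᶜ = X₀
  pairwise_disjoint : Pairwise (Function.onFun Disjoint X)
  fragmented : Fragmented μ Γ X₀
  strongComponent : ∀ i, StrongComponent μ Γ (X i)

namespace IsStrongDecomposition

theorem of_partition {κ : Type*} {o : κ} {I : Set κ} {X : κ → Set Ω} (ho : o ∉ I)
    (h_disj : (insert o I).PairwiseDisjoint X) (h_cover : (⋃ i ∈ insert o I, X i) = univ)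
    (h_frag : μ (X o) = 0 ∨ Fragmented μ Γ (X o)) (h_comp : ∀ i ∈ I, StrongComponent μ Γ (X i)) :
    IsStrongDecomposition μ Γ (X o) (fun i : I => X i) where
  compl_iUnion := by
    rw [← biUnion_eq_iUnion I fun i _ => X i]
    rw [biUnion_insert] at h_cover
    have h_disj_o : Disjoint (X o) (⋃ i ∈ I, X i) :=
      disjoint_iUnion₂_right.2 ((pairwiseDisjoint_insert_of_notMem ho).1 h_disj).2
    exact (IsCompl.of_eq h_disj_o.inter_eq h_cover).symm.compl_eq
  pairwise_disjoint := (h_disj.subset (subset_insert o I)).subtype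
  fragmented := h_frag.elim .of_measure_eq_zero id
  strongComponent i := h_comp i i.2

variable {ι : Type*} {X₀ : Set Ω} {X : ι → Set Ω}

theorem exists_ae_eq [Countable ι] (hX : IsStrongDecomposition μ Γ X₀ X) {S : Set Ω}
    (hS : StrongComponent μ Γ S) : ∃ i, S =ᵐ[μ] X i := by
  have h_frag : Fragmented μ Γ (⋃ i, X i)ᶜ := hX.compl_iUnion ▸ hX.fragmented
  obtain ⟨i, hi⟩ := hS.1.exists_not_aedisjoint (fun i => (hX.strongComponent i).1.1) h_frag
  exact ⟨i, hS.ae_eq_of_not_aedisjoint (hX.strongComponent i) hi⟩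

theorem eq_of_ae_eq (hX : IsStrongDecomposition μ Γ X₀ X) {i j : ι} (hij : X i =ᵐ[μ] X j) :
    i = j := by
  by_contra h_ne
  have h_null : μ (X i) = 0 := by
    simpa only [(hX.pairwise_disjoint h_ne).sdiff_eq_left] using ae_le_set.1 hij.le
  exact (hX.strongComponent i).1.2.1.ne' h_null

end IsStrongDecomposition

theorem decomposition_into_strong_components_unique_general
    {ι ι' : Type*} [Countable ι] [Countable ι'] {X₀ X₀' : Set Ω} {X : ι → Set Ω}
    {X' : ι' → Set Ω} (hX : IsStrongDecomposition μ Γ X₀ X)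
    (hX' : IsStrongDecomposition μ Γ X₀' X') :
    ∃ φ : ι → ι', Function.Bijective φ ∧ (∀ i, AEEqSet μ (X i) (X' (φ i))) ∧
      AEEqSet μ X₀ X₀' := by
  choose φ hφ using fun i => hX'.exists_ae_eq (hX.strongComponent i)
  have h_inj : Function.Injective φ := fun i j hij =>
    hX.eq_of_ae_eq ((hφ i).trans (hij ▸ (hφ j).symm))
  have h_surj : Function.Surjective φ := fun j => by
    obtain ⟨i, hi⟩ := hX.exists_ae_eq (hX'.strongComponent j)
    exact ⟨i, hX'.eq_of_ae_eq (hi.trans (hφ i)).symm⟩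
  have h_iUnion : (⋃ i, X i) =ᵐ[μ] ⋃ j, X' j :=
    h_surj.iUnion_comp X' ▸ Filter.EventuallyEq.countable_iUnion hφ
  have h_rest : X₀ =ᵐ[μ] X₀' := by
    rw [← hX.compl_iUnion, ← hX'.compl_iUnion]
    exact h_iUnion.compl
  exact ⟨φ, ⟨h_inj, h_surj⟩, fun i => aeEqSet_iff_ae_eq.2 (hφ i), aeEqSet_iff_ae_eq.2 h_rest⟩

end Uniqueness

/-- Uniqueness (modulo nullsets) of the decomposition of a digraphon into
strong components and a fragmented (or null) set. -/
theorem decomposition_into_strong_components_unique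
    {Ω : Type*} [MeasurableSpace Ω] (μ : Measure Ω) [IsProbabilityMeasure μ]
    (Γ : Ω → Ω → ℝ) (hΓ : IsDigraphon Γ)
    (I I' : Set ℕ) (hI : 0 ∉ I) (hI' : 0 ∉ I')
    (X X' : ℕ → Set Ω)
    (hXmeas : ∀ i ∈ insert 0 I, MeasurableSet (X i))
    (hXdisj : (insert 0 I).PairwiseDisjoint X)
    (hXcover : (⋃ i ∈ insert 0 I, X i) = Set.univ)
    (hX0 : μ (X 0) = 0 ∨ Fragmented μ Γ (X 0))
    (hXcomp : ∀ i ∈ I, StrongComponent μ Γ (X i))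
    (hX'meas : ∀ i ∈ insert 0 I', MeasurableSet (X' i))
    (hX'disj : (insert 0 I').PairwiseDisjoint X')
    (hX'cover : (⋃ i ∈ insert 0 I', X' i) = Set.univ)
    (hX'0 : μ (X' 0) = 0 ∨ Fragmented μ Γ (X' 0))
    (hX'comp : ∀ i ∈ I', StrongComponent μ Γ (X' i)) :
    ∃ φ : I → I', Function.Bijective φ ∧
      (∀ i : I, AEEqSet μ (X i) (X' (φ i))) ∧ AEEqSet μ (X 0) (X' 0) := by
  exact decomposition_into_strong_components_unique_general
    (.of_partition hI hXdisj hXcover hX0 hXcomp) (.of_partition hI' hX'disj hX'cover hX'0 hX'comp)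

end Digraphon
end

section
/- Let Γ be a strongly connected digraphon on a probability space (Ω,μ) with peripheral multiplicity D, let Ω = P₀ ⊔ P₁ ⊔ … ⊔ P_{D−1} be a partition witnessing graphical D-periodicity such that reachability sequences between P_i and P_j are eventually D-periodic with shift j−i, and let v_L and v_R be the real left and right eigenfunctions for the eigenvalue ρ(Γ). Then the decomposition of the digraphon Γ^D into strong components consists of an empty fragmented set and exactly the strong components P₀, P₁, …, P_{D−1}; moreover, for each i, the digraphon (Γ^D) restricted to P_i × P_i (with the normalized measure μ(·∩P_i)/μ(P_i)) is aperiodic, has spectral radius ρ(Γ)^D/μ(P_i), and the restrictions of v_L and v_R to P_i are its left and right eigenfunctions for this eigenvalue. -/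
open MeasureTheory Filter Set Topology
open scoped ENNReal Real

namespace Digraphon

variable {Ω : Type*} [MeasurableSpace Ω]

/-!
Almost all edges of `Γ^D` stay inside one of the classes `P i`, and almost everywhere on
`P i × P i` all sufficiently high powers of `Γ^D` are positive. A set without outgoing edges, or a
further cyclic partition, would make infinitely many of these powers vanish on a product of two
nonnull sets; hence the classes are the strong components and the restrictions are aperiodic.

A power of a nonnegative kernel that is eventually positive on a nonnull set exceeds some `c > 0`
on most of a square. So there are `δ > 0` and a nonnull set `A` all of whose columns have integral
at least `δ` over `A`, and the iterates of the indicator of `A` grow at least like `δ ^ k`.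
By Gelfand's formula and compactness the operator then has a nonzero eigenvalue, so `ρ(Γ) > 0`.
An eigenfunction for `ρ(Γ)` that vanishes on one class vanishes on the next one, and so everywhere;
thus its restrictions to the classes are nonzero and are eigenfunctions for `ρ(Γ) ^ D / μ (P i)`.
No eigenvalue is larger, since eigenfunctions of the restriction extend by zero to eigenfunctions
of `Γ^D`, whose nonzero eigenvalues are `D`-th powers of eigenvalues of `Γ`.

The eigenvalues of modulus `ρ(Γ) > 0` are finitely many because the operator is Hilbert–Schmidt:
orthonormalizing eigenvectors makes it triangular, with the eigenvalues on the diagonal. Hence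
`D ≠ 0`, although `Set.ncard` would assign the value `0` to an infinite set.
-/

section HilbertSchmidt

open InnerProductSpace

variable {ι 𝕜 H F : Type*} [RCLike 𝕜] [NormedAddCommGroup H] [InnerProductSpace 𝕜 H]
  [NormedAddCommGroup F] [NormedSpace 𝕜 F]

lemma norm_sq_apply_le_of_hilbertBasis (b : HilbertBasis ι 𝕜 H) (S : H →L[𝕜] F) {B : ℝ}
    (hB : ∀ s : Finset ι, ∑ i ∈ s, ‖S (b i)‖ ^ 2 ≤ B) (f : H) : ‖S f‖ ^ 2 ≤ B * ‖f‖ ^ 2 := by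
  have hsum : HasSum (fun i => b.repr f i • S (b i)) (S f) := by
    simpa using (b.hasSum_repr f).mapL S
  refine le_of_tendsto (hsum.norm.pow 2) (.of_forall fun s => ?_)
  have hbessel : ∑ i ∈ s, ‖b.repr f i‖ ^ 2 ≤ ‖f‖ ^ 2 := by
    simpa only [b.repr_apply_apply] using b.orthonormal.sum_inner_products_le f
  calc ‖∑ i ∈ s, b.repr f i • S (b i)‖ ^ 2
      ≤ (∑ i ∈ s, ‖S (b i)‖ * ‖b.repr f i‖) ^ 2 := by
        gcongr
        exact (norm_sum_le _ _).trans_eq (by simp only [norm_smul, mul_comm])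
    _ ≤ (∑ i ∈ s, ‖S (b i)‖ ^ 2) * ∑ i ∈ s, ‖b.repr f i‖ ^ 2 :=
        Finset.sum_mul_sq_le_sq_mul_sq ..
    _ ≤ B * ‖f‖ ^ 2 := mul_le_mul (hB s) hbessel (by positivity) ((by simpa using hB ∅))

lemma isCompactOperator_smulRight (φ : StrongDual 𝕜 H) (v : F) :
    IsCompactOperator (φ.smulRight v) :=
  (isCompactOperator_of_locallyCompactSpace_rng (.toSpanSingleton 𝕜 v)).comp_clm φ

lemma isCompactOperator_of_summable_norm_sq [CompleteSpace F] (b : HilbertBasis ι 𝕜 H)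
    {T : H →L[𝕜] F} (hT : Summable fun i => ‖T (b i)‖ ^ 2) : IsCompactOperator T := by
  classical
  refine isClosed_setOfPred_isCompactOperator.closure_subset
    (Metric.mem_closure_iff.2 fun ε hε => ?_)
  obtain ⟨s, hs⟩ := summable_iff_vanishing_norm.1 hT ((ε / 2) ^ 2) (by positivity)
  let A : H →L[𝕜] F := ∑ i ∈ s, (innerSL 𝕜 (b i)).smulRight (T (b i))
  have hA : IsCompactOperator A :=
    (compactOperator (RingHom.id 𝕜) H F).sum_mem fun i _ => isCompactOperator_smulRight ..
  have hTA (j : ι) : (T - A) (b j) = if j ∈ s then 0 else T (b j) := by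
    have hsum : A (b j) = if j ∈ s then T (b j) else 0 := by
      simp [A, orthonormal_iff_ite.1 b.orthonormal, ite_smul]
    rw [sub_apply, hsum]
    split_ifs <;> simp
  have htail (t : Finset ι) : ∑ j ∈ t, ‖(T - A) (b j)‖ ^ 2 ≤ (ε / 2) ^ 2 := by
    calc ∑ j ∈ t, ‖(T - A) (b j)‖ ^ 2 = ∑ j ∈ t \ s, ‖T (b j)‖ ^ 2 := by
          rw [Finset.sdiff_eq_filter, Finset.sum_filter]
          refine Finset.sum_congr rfl fun j _ => ?_
          rw [hTA]
          split_ifs <;> simp_all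
      _ ≤ (ε / 2) ^ 2 := (le_abs_self _).trans (hs _ Finset.sdiff_disjoint).le
  refine ⟨A, hA, ?_⟩
  rw [dist_eq_norm]
  have hbound (f : H) : ‖(T - A) f‖ ≤ ε / 2 * ‖f‖ := by
    refine le_of_sq_le_sq ?_ (by positivity)
    rw [mul_pow]
    exact norm_sq_apply_le_of_hilbertBasis b _ htail f
  exact (ContinuousLinearMap.opNorm_le_bound _ (by positivity) hbound).trans_lt (half_lt_self hε)

/-- On the orthogonalized eigenvectors the operator is triangular with the eigenvalues on the
diagonal. -/
lemma inner_gramSchmidt_apply_gramSchmidt {T : H →L[𝕜] H} {τ : ℕ → 𝕜} {v : ℕ → H}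
    (hv : ∀ i, T (v i) = τ i • v i) (n : ℕ) :
    inner 𝕜 (gramSchmidt 𝕜 v n) (T (gramSchmidt 𝕜 v n)) = τ n * ‖gramSchmidt 𝕜 v n‖ ^ 2 := by
  set g := gramSchmidt 𝕜 v n with hg
  set V := Submodule.span 𝕜 (v '' Iio n) with hV
  have hinv : V ≤ V.comap (T : H →ₗ[𝕜] H) := by
    rw [hV, Submodule.span_le]
    rintro _ ⟨i, hi, rfl⟩
    rw [SetLike.mem_coe, Submodule.mem_comap, ContinuousLinearMap.coe_coe, hv]
    exact Submodule.smul_mem _ _ (Submodule.subset_span (mem_image_of_mem v hi))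
  have horth : V ≤ (𝕜 ∙ g)ᗮ := by
    rw [hV, Submodule.span_le]
    rintro _ ⟨i, hi, rfl⟩
    exact Submodule.mem_orthogonal_singleton_iff_inner_right.2 (gramSchmidt_inv_triangular 𝕜 v hi)
  have hgv : g - v n ∈ V := by
    rw [hg, gramSchmidt_def, sub_sub_cancel_left, hV, ← span_gramSchmidt_Iio]
    refine Submodule.neg_mem _ (Submodule.sum_mem _ fun i hi => ?_)
    rw [Submodule.starProjection_singleton]
    exact Submodule.smul_mem _ _ (Submodule.subset_span (mem_image_of_mem _ (Finset.mem_Iio.1 hi)))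
  have hTg : T g - τ n • g ∈ V := by
    have : T g - τ n • g = T (g - v n) - τ n • (g - v n) := by
      rw [map_sub, hv, smul_sub]
      abel
    rw [this]
    exact V.sub_mem (hinv hgv) (V.smul_mem _ hgv)
  have hzero : inner 𝕜 g (T g - τ n • g) = 0 :=
    Submodule.mem_orthogonal_singleton_iff_inner_right.1 (horth hTg)
  rwa [inner_sub_right, inner_smul_right, inner_self_eq_norm_sq_to_K, sub_eq_zero] at hzero

lemma finite_setOf_hasEigenvalue_le_norm {T : H →L[𝕜] H}
    (hT : ∀ e : ℕ → H, Orthonormal 𝕜 e → Summable fun i => ‖T (e i)‖ ^ 2) {r : ℝ} (hr : 0 < r) :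
    {τ : 𝕜 | Module.End.HasEigenvalue (T : Module.End 𝕜 H) τ ∧ r ≤ ‖τ‖}.Finite := by
  by_contra hinf
  let τ := Set.Infinite.natEmbedding _ hinf
  choose v hv using fun i => (τ i).2.1.exists_hasEigenvector
  have hindep : LinearIndependent 𝕜 v :=
    Module.End.eigenvectors_linearIndependent' (T : Module.End 𝕜 H) (fun i => (τ i : 𝕜))
      (Subtype.val_injective.comp τ.injective) v hv
  have he := gramSchmidtNormed_orthonormal hindep
  have hlower (i : ℕ) : r ^ 2 ≤ ‖T (gramSchmidtNormed 𝕜 v i)‖ ^ 2 := by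
    have hg : 0 < ‖gramSchmidt 𝕜 v i‖ := norm_pos_iff.2 (gramSchmidt_ne_zero i hindep)
    have hdiag := inner_gramSchmidt_apply_gramSchmidt (fun i => (hv i).apply_eq_smul) i
    have hle : ‖(τ i : 𝕜)‖ * ‖gramSchmidt 𝕜 v i‖ ≤ ‖T (gramSchmidt 𝕜 v i)‖ := by
      refine le_of_mul_le_mul_left ?_ hg
      calc ‖gramSchmidt 𝕜 v i‖ * (‖(τ i : 𝕜)‖ * ‖gramSchmidt 𝕜 v i‖)
          = ‖inner 𝕜 (gramSchmidt 𝕜 v i) (T (gramSchmidt 𝕜 v i))‖ := by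
            rw [hdiag, norm_mul, norm_pow, RCLike.norm_ofReal, abs_norm]
            ring
        _ ≤ ‖gramSchmidt 𝕜 v i‖ * ‖T (gramSchmidt 𝕜 v i)‖ := norm_inner_le_norm _ _
    rw [gramSchmidtNormed, map_smul, norm_smul, norm_inv, RCLike.norm_ofReal, abs_norm,
      ← div_eq_inv_mul]
    gcongr
    exact (τ i).2.2.trans ((le_div_iff₀ hg).2 hle)
  exact (pow_pos hr 2).not_ge (ge_of_tendsto' (hT _ he).tendsto_atTop_zero hlower)

end HilbertSchmidt

section Spectrum

variable {E : Type*} [NormedAddCommGroup E] [NormedSpace ℂ E] [CompleteSpace E]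

lemma le_spectralRadius_of_pow_mul_norm_le {S : E →L[ℂ] E} {g : E} (hg : g ≠ 0) {δ : ℝ}
    (hδ : 0 ≤ δ) (h : ∀ k : ℕ, δ ^ k * ‖g‖ ≤ ‖(S ^ k) g‖) :
    ENNReal.ofReal δ ≤ spectralRadius ℂ S := by
  refine ge_of_tendsto (spectrum.pow_nnnorm_pow_one_div_tendsto_nhds_spectralRadius S) ?_
  filter_upwards [eventually_ne_atTop 0] with k hk
  have hpow : δ ^ k ≤ ‖S ^ k‖ :=
    le_of_mul_le_mul_right ((h k).trans ((S ^ k).le_opNorm g)) (norm_pos_iff.2 hg)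
  rw [one_div, ENNReal.le_rpow_inv_iff (by positivity), ENNReal.rpow_natCast,
    ← ENNReal.ofReal_pow hδ, ← enorm_eq_nnnorm, ← ofReal_norm]
  exact ENNReal.ofReal_le_ofReal hpow

lemma exists_ne_zero_hasEigenvalue_of_pow_mul_norm_le {S : E →L[ℂ] E} (hS : IsCompactOperator S)
    {g : E} (hg : g ≠ 0) {δ : ℝ} (hδ : 0 < δ) (h : ∀ k : ℕ, δ ^ k * ‖g‖ ≤ ‖(S ^ k) g‖) :
    ∃ τ : ℂ, τ ≠ 0 ∧ Module.End.HasEigenvalue (S : Module.End ℂ E) τ := by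
  have : Nontrivial E := ⟨g, 0, hg⟩
  obtain ⟨τ, hτ, hτr⟩ := spectrum.exists_nnnorm_eq_spectralRadius S
  have hpos : 0 < (‖τ‖₊ : ℝ≥0∞) := hτr ▸
    (ENNReal.ofReal_pos.2 hδ).trans_le (le_spectralRadius_of_pow_mul_norm_le hg hδ.le h)
  have hτ0 : τ ≠ 0 := by simpa using hpos
  exact ⟨τ, hτ0, (hS.hasEigenvalue_iff_mem_spectrum hτ0).2 hτ⟩

lemma exists_hasEigenvalue_pow_eq {S : E →L[ℂ] E} (hS : IsCompactOperator S) {n : ℕ} (hn : n ≠ 0)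
    {τ : ℂ} (hτ0 : τ ≠ 0) (hτ : Module.End.HasEigenvalue ((S ^ n : E →L[ℂ] E) : Module.End ℂ E) τ) :
    ∃ σ : ℂ, Module.End.HasEigenvalue (S : Module.End ℂ E) σ ∧ σ ^ n = τ := by
  have hτS : τ ∈ spectrum ℂ (S ^ n) := by
    obtain ⟨m, rfl⟩ := Nat.exists_eq_succ_of_ne_zero hn
    have hSn : IsCompactOperator (S ^ (m + 1)) := by
      rw [pow_succ]
      exact hS.clm_comp _
    exact (hSn.hasEigenvalue_iff_mem_spectrum hτ0).1 hτ
  rw [spectrum.map_pow_of_pos S (Nat.pos_of_ne_zero hn)] at hτS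
  obtain ⟨σ, hσ, rfl⟩ := hτS
  exact ⟨σ, (hS.hasEigenvalue_iff_mem_spectrum (pow_ne_zero_iff hn |>.1 hτ0)).2 hσ, rfl⟩

end Spectrum

section BoundedKernel

/-- A bounded measurable real kernel. Digraphons and their kernel powers are of this kind. -/
structure IsBoundedKernel (K : Ω → Ω → ℝ) : Prop where
  measurable : Measurable (Function.uncurry K)
  bounded : ∃ C, ∀ x y, |K x y| ≤ C

/-- The kernel `x, y ↦ ∫ z, K x z * L z y ∂μ`, corresponding to multiplication of matrices. -/
noncomputable def kernelComp (μ : Measure Ω) (K L : Ω → Ω → ℝ) (x y : Ω) : ℝ :=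
  ∫ z, K x z * L z y ∂μ

/-- The action of a kernel on functions, `f` being a row vector multiplied by the matrix `K` from
the right. Values in a real normed space are allowed so that real and complex eigenfunctions are
treated at once. -/
noncomputable def kernelApply {E : Type*} [NormedAddCommGroup E] [NormedSpace ℝ E]
    (μ : Measure Ω) (K : Ω → Ω → ℝ) (f : Ω → E) (x : Ω) : E :=
  ∫ y, K y x • f y ∂μ

variable {E : Type*} [NormedAddCommGroup E] [NormedSpace ℝ E] {μ : Measure Ω}
  {K L M : Ω → Ω → ℝ}

lemma IsDigraphon.isBoundedKernel {Γ : Ω → Ω → ℝ} (hΓ : IsDigraphon Γ) : IsBoundedKernel Γ :=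
  ⟨hΓ.1, 1, fun x y => abs_le.2 ⟨by linarith [(hΓ.2 x y).1], (hΓ.2 x y).2⟩⟩

namespace IsBoundedKernel

lemma measurable_left (hK : IsBoundedKernel K) (y : Ω) : Measurable fun x => K x y :=
  hK.measurable.of_uncurry_right

lemma measurable_right (hK : IsBoundedKernel K) (x : Ω) : Measurable (K x) :=
  hK.measurable.of_uncurry_left

protected lemma swap (hK : IsBoundedKernel K) : IsBoundedKernel (Function.swap K) :=
  ⟨hK.measurable.comp measurable_swap, hK.bounded.imp fun _ hC x y => hC y x⟩

lemma integrable_right [IsFiniteMeasure μ] (hK : IsBoundedKernel K) (x : Ω) :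
    Integrable (K x) μ :=
  have ⟨C, hC⟩ := hK.bounded
  .of_bound (hK.measurable_right x).aestronglyMeasurable C (.of_forall (hC x))

lemma integrable_smul (hK : IsBoundedKernel K) {f : Ω → E} (hf : Integrable f μ) (x : Ω) :
    Integrable (fun y => K y x • f y) μ :=
  have ⟨C, hC⟩ := hK.bounded
  hf.bdd_smul C (hK.measurable_left x).aestronglyMeasurable (.of_forall fun y => hC y x)

lemma kernelComp [IsFiniteMeasure μ] (hK : IsBoundedKernel K) (hL : IsBoundedKernel L) :
    IsBoundedKernel (kernelComp μ K L) := by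
  obtain ⟨C, hC⟩ := hK.bounded
  obtain ⟨C', hC'⟩ := hL.bounded
  constructor
  · have hmeas : Measurable fun q : (Ω × Ω) × Ω => K q.1.1 q.2 * L q.2 q.1.2 :=
      (hK.measurable.comp (measurable_fst.fst.prodMk measurable_snd)).mul
        (hL.measurable.comp (measurable_snd.prodMk measurable_fst.snd))
    exact hmeas.stronglyMeasurable.integral_prod_right.measurable
  · refine ⟨C * C' * μ.real univ, fun x y => (Real.norm_eq_abs _).symm.trans_le
      (norm_integral_le_of_norm_le_const (.of_forall fun z => ?_))⟩
    rw [norm_mul]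
    exact mul_le_mul (hC x z) (hC' z y) (norm_nonneg _) ((abs_nonneg _).trans (hC x z))

end IsBoundedKernel

lemma kernelApply_congr_ae {f g : Ω → E} (h : f =ᵐ[μ] g) : kernelApply μ K f = kernelApply μ K g :=
  funext fun x => integral_congr_ae (h.mono fun y hy => by simp only [hy])

lemma kernelApply_const_smul {𝕜 : Type*} [RCLike 𝕜] [NormedSpace 𝕜 E]
    (c : 𝕜) (f : Ω → E) : kernelApply μ K (c • f) = c • kernelApply μ K f := by
  ext x
  simp only [kernelApply, Pi.smul_apply, smul_comm _ c, integral_smul]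

lemma kernelComp_eq_kernelApply (x : Ω) : kernelComp μ K L x = kernelApply μ L (K x) := by
  ext y
  simp only [kernelComp, kernelApply, smul_eq_mul, mul_comm]

lemma swap_kernelComp :
    Function.swap (kernelComp μ K L) = kernelComp μ (Function.swap L) (Function.swap K) := by
  ext x y
  simp only [Function.swap, kernelComp, mul_comm]

lemma kernelApply_kernelComp [CompleteSpace E] [IsFiniteMeasure μ] (hK : IsBoundedKernel K)
    (hL : IsBoundedKernel L) {f : Ω → E} (hf : Integrable f μ) :
    kernelApply μ (kernelComp μ K L) f = kernelApply μ L (kernelApply μ K f) := by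
  ext x
  obtain ⟨C, hC⟩ := hK.bounded
  obtain ⟨C', hC'⟩ := hL.bounded
  have hmeas : Measurable fun p : Ω × Ω => K p.1 p.2 * L p.2 x :=
    hK.measurable.mul ((hL.measurable_left x).comp measurable_snd)
  have hint : Integrable (fun p : Ω × Ω => (K p.1 p.2 * L p.2 x) • f p.1) (μ.prod μ) := by
    refine (hf.comp_fst μ).bdd_smul (C * C') hmeas.aestronglyMeasurable (.of_forall fun p => ?_)
    rw [norm_mul]
    exact mul_le_mul (hC _ _) (hC' _ _) (norm_nonneg _) ((abs_nonneg _).trans (hC p.1 p.2))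
  calc ∫ y, (∫ z, K y z * L z x ∂μ) • f y ∂μ
      = ∫ y, ∫ z, (K y z * L z x) • f y ∂μ ∂μ := by simp only [integral_smul_const]
    _ = ∫ z, ∫ y, (K y z * L z x) • f y ∂μ ∂μ := integral_integral_swap hint
    _ = ∫ z, L z x • ∫ y, K y z • f y ∂μ ∂μ := by
        simp only [← integral_smul, smul_smul, mul_comm]

lemma kernelComp_assoc [IsFiniteMeasure μ] (hK : IsBoundedKernel K) (hL : IsBoundedKernel L)
    (hM : IsBoundedKernel M) :
    kernelComp μ (kernelComp μ K L) M = kernelComp μ K (kernelComp μ L M) := by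
  ext1 x
  simp only [kernelComp_eq_kernelApply x]
  exact (kernelApply_kernelComp hL hM (hK.integrable_right x)).symm

end BoundedKernel

section Powers

variable {μ : Measure Ω} {K : Ω → Ω → ℝ}

@[simp] lemma dpow_one : dpow μ K 1 = K := rfl

lemma dpow_succ {n : ℕ} (hn : 1 ≤ n) : dpow μ K (n + 1) = kernelComp μ K (dpow μ K n) := by
  obtain ⟨m, rfl⟩ := Nat.exists_eq_add_of_le' hn
  rfl

lemma IsBoundedKernel.dpow [IsFiniteMeasure μ] (hK : IsBoundedKernel K) {n : ℕ} (hn : 1 ≤ n) :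
    IsBoundedKernel (dpow μ K n) := by
  induction n, hn using Nat.le_induction with
  | base => exact hK
  | succ n hn ih => exact dpow_succ (μ := μ) hn ▸ hK.kernelComp ih

lemma dpow_nonneg (hK : ∀ x y, 0 ≤ K x y) {n : ℕ} (hn : 1 ≤ n) (x y : Ω) :
    0 ≤ dpow μ K n x y := by
  induction n, hn using Nat.le_induction generalizing x with
  | base => exact hK x y
  | succ n hn ih =>
    rw [dpow_succ hn]
    exact integral_nonneg fun z => mul_nonneg (hK x z) (ih z)

lemma dpow_add [IsFiniteMeasure μ] (hK : IsBoundedKernel K) {m n : ℕ} (hm : 1 ≤ m) (hn : 1 ≤ n) :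
    dpow μ K (m + n) = kernelComp μ (dpow μ K m) (dpow μ K n) := by
  induction m, hm using Nat.le_induction with
  | base => rw [add_comm, dpow_succ hn, dpow_one]
  | succ m hm ih =>
    rw [Nat.add_right_comm, dpow_succ (by omega), ih, dpow_succ hm,
      kernelComp_assoc hK (hK.dpow hm) (hK.dpow hn)]

lemma dpow_dpow [IsFiniteMeasure μ] (hK : IsBoundedKernel K) {m n : ℕ} (hm : 1 ≤ m) (hn : 1 ≤ n) :
    dpow μ (dpow μ K m) n = dpow μ K (m * n) := by
  induction n, hn using Nat.le_induction with
  | base => rw [dpow_one, mul_one]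
  | succ n hn ih =>
    rw [dpow_succ hn, ih, mul_add_one, add_comm, dpow_add hK hm (Nat.mul_pos hm hn)]

lemma dpow_swap [IsFiniteMeasure μ] (hK : IsBoundedKernel K) {n : ℕ} (hn : 1 ≤ n) :
    dpow μ (Function.swap K) n = Function.swap (dpow μ K n) := by
  induction n, hn using Nat.le_induction with
  | base => rfl
  | succ n hn ih => rw [dpow_succ hn, ih, dpow_add hK hn le_rfl, swap_kernelComp, dpow_one]

lemma kernelApply_dpow_ae_eq [IsFiniteMeasure μ] {𝕜 : Type*} [RCLike 𝕜] {E : Type*}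
    [NormedAddCommGroup E] [NormedSpace ℝ E] [NormedSpace 𝕜 E] [CompleteSpace E]
    (hK : IsBoundedKernel K) {f : Ω → E} (hf : Integrable f μ) {c : 𝕜}
    (h : kernelApply μ K f =ᵐ[μ] c • f) {n : ℕ} (hn : 1 ≤ n) :
    kernelApply μ (dpow μ K n) f =ᵐ[μ] c ^ n • f := by
  induction n, hn using Nat.le_induction with
  | base => simpa using h
  | succ n hn ih =>
    have hstep : kernelApply μ (dpow μ K (n + 1)) f = c • kernelApply μ (dpow μ K n) f := by
      rw [dpow_succ hn, kernelApply_kernelComp hK (hK.dpow hn) hf, kernelApply_congr_ae h,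
        kernelApply_const_smul]
    rw [hstep, pow_succ', mul_smul]
    exact ih.const_smul c

end Powers

section Operator

open scoped InnerProductSpace

lemma norm_sq_eq_integral {μ : Measure Ω} (f : Lp ℂ 2 μ) : ‖f‖ ^ 2 = ∫ x, ‖f x‖ ^ 2 ∂μ := by
  rw [← RCLike.ofReal_inj (K := ℂ), RCLike.ofReal_pow, ← inner_self_eq_norm_sq_to_K, L2.inner_def,
    ← integral_ofReal]
  simp only [inner_self_eq_norm_sq_to_K, RCLike.ofReal_pow]

variable {μ : Measure Ω} [IsFiniteMeasure μ] {K : Ω → Ω → ℝ}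

lemma IsBoundedKernel.memLp_section (hK : IsBoundedKernel K) (x : Ω) :
    MemLp (fun y => (K y x : ℂ)) 2 μ :=
  have ⟨C, hC⟩ := hK.bounded
  .of_bound (hK.measurable_left x).complex_ofReal.aestronglyMeasurable C
    (.of_forall fun y => (Complex.norm_real _).trans_le (hC y x))

/-- The function `K · x` as a vector of `L²`; the operator of `K` is the inner product with it. -/
noncomputable def kernelSection (μ : Measure Ω) [IsFiniteMeasure μ] (hK : IsBoundedKernel K)
    (x : Ω) : Lp ℂ 2 μ :=
  (hK.memLp_section x).toLp

lemma kernelApply_eq_inner (hK : IsBoundedKernel K) (f : Lp ℂ 2 μ) (x : Ω) :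
    kernelApply μ K f x = ⟪kernelSection μ hK x, f⟫_ℂ := by
  rw [L2.inner_def]
  refine integral_congr_ae ?_
  filter_upwards [(hK.memLp_section x).coeFn_toLp] with y hy
  rw [kernelSection, hy, RCLike.inner_apply, Complex.conj_ofReal, Complex.real_smul, mul_comm]

lemma exists_norm_kernelSection_le (hK : IsBoundedKernel K) :
    ∃ M, 0 ≤ M ∧ ∀ x, ‖kernelSection μ hK x‖ ≤ M := by
  obtain ⟨C, hC⟩ := hK.bounded
  refine ⟨_, by positivity, fun x => Lp.norm_le_of_ae_bound (abs_nonneg C) ?_⟩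
  filter_upwards [(hK.memLp_section x).coeFn_toLp] with y hy
  rw [kernelSection, hy, Complex.norm_real]
  exact (hC y x).trans (le_abs_self C)

lemma aestronglyMeasurable_kernelApply {E : Type*} [NormedAddCommGroup E] [NormedSpace ℝ E]
    (hK : IsBoundedKernel K) {f : Ω → E} (hf : AEStronglyMeasurable f μ) :
    AEStronglyMeasurable (kernelApply μ K f) μ :=
  ((hK.swap.measurable.aestronglyMeasurable.smul hf.comp_snd).integral_prod_right' :)

lemma memLp_kernelApply (hK : IsBoundedKernel K) (f : Lp ℂ 2 μ) :
    MemLp (kernelApply μ K f) 2 μ := by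
  obtain ⟨M, -, hM⟩ := exists_norm_kernelSection_le (μ := μ) hK
  refine .of_bound (aestronglyMeasurable_kernelApply hK (Lp.aestronglyMeasurable f)) (M * ‖f‖)
    (.of_forall fun x => ?_)
  rw [kernelApply_eq_inner hK]
  exact (norm_inner_le_norm _ _).trans (by gcongr; exact hM x)

/-- The integral operator `f ↦ kernelApply μ K f` on complex `L²`. -/
noncomputable def kernelOp (μ : Measure Ω) [IsFiniteMeasure μ] (hK : IsBoundedKernel K) :
    Lp ℂ 2 μ →L[ℂ] Lp ℂ 2 μ :=
  LinearMap.mkContinuousOfExistsBound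
    { toFun f := (memLp_kernelApply hK f).toLp
      map_add' f g := by
        rw [← MemLp.toLp_add]
        congr 1
        ext x
        simp only [kernelApply_eq_inner hK, inner_add_right, Pi.add_apply]
      map_smul' c f := by
        rw [RingHom.id_apply, ← MemLp.toLp_const_smul]
        congr 1
        ext x
        simp only [kernelApply_eq_inner hK, inner_smul_right, Pi.smul_apply, smul_eq_mul] }
    (by
      obtain ⟨M, hM0, hM⟩ := exists_norm_kernelSection_le (μ := μ) hK
      refine ⟨μ.real univ ^ (2 : ℝ≥0∞).toReal⁻¹ * M, fun f => ?_⟩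
      rw [mul_assoc]
      refine Lp.norm_le_of_ae_bound (by positivity) ?_
      filter_upwards [(memLp_kernelApply hK f).coeFn_toLp] with x hx
      rw [LinearMap.coe_mk, AddHom.coe_mk, hx, kernelApply_eq_inner hK]
      exact (norm_inner_le_norm _ _).trans (by gcongr; exact hM x))

lemma kernelOp_coeFn (hK : IsBoundedKernel K) (f : Lp ℂ 2 μ) :
    kernelOp μ hK f =ᵐ[μ] kernelApply μ K f :=
  (memLp_kernelApply hK f).coeFn_toLp

lemma kernelOp_dpow (hK : IsBoundedKernel K) {n : ℕ} (hn : 1 ≤ n) :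
    kernelOp μ (hK.dpow (μ := μ) hn) = kernelOp μ hK ^ n := by
  induction n, hn using Nat.le_induction with
  | base => simp only [dpow_one, pow_one]
  | succ n hn ih =>
    ext1 f
    rw [pow_succ, mul_apply_eq_comp, ← ih]
    refine Lp.ext ((kernelOp_coeFn _ f).trans ?_)
    rw [dpow_succ hn,
      kernelApply_kernelComp hK (hK.dpow hn) ((Lp.memLp f).integrable one_le_two),
      ← kernelApply_congr_ae (kernelOp_coeFn hK f)]
    exact (kernelOp_coeFn _ _).symm

lemma summable_norm_sq_kernelOp (hK : IsBoundedKernel K) {ι : Type*} {e : ι → Lp ℂ 2 μ}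
    (he : Orthonormal ℂ e) : Summable fun i => ‖kernelOp μ hK (e i)‖ ^ 2 := by
  obtain ⟨M, -, hM⟩ := exists_norm_kernelSection_le (μ := μ) hK
  have hnorm (i : ι) : ‖kernelOp μ hK (e i)‖ ^ 2 = ∫ x, ‖kernelApply μ K (e i) x‖ ^ 2 ∂μ := by
    rw [norm_sq_eq_integral]
    exact integral_congr_ae ((kernelOp_coeFn hK (e i)).mono fun x hx => by simp only [hx])
  have hint (i : ι) : Integrable (fun x => ‖kernelApply μ K (e i) x‖ ^ 2) μ :=
    (memLp_two_iff_integrable_sq_norm (memLp_kernelApply hK (e i)).1).1 (memLp_kernelApply hK (e i))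
  have hbessel (s : Finset ι) (x : Ω) : ∑ i ∈ s, ‖kernelApply μ K (e i) x‖ ^ 2 ≤ M ^ 2 := by
    simp only [kernelApply_eq_inner hK, norm_inner_symm (kernelSection μ hK x)]
    exact (he.sum_inner_products_le _).trans (by gcongr; exact hM x)
  refine summable_of_sum_le (c := ∫ _, M ^ 2 ∂μ) (fun i => sq_nonneg _) fun s => ?_
  simp only [hnorm]
  rw [← integral_finsetSum s fun i _ => hint i]
  exact integral_mono (integrable_finsetSum s fun i _ => hint i) (integrable_const _) (hbessel s)

lemma isCompactOperator_kernelOp (hK : IsBoundedKernel K) :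
    IsCompactOperator (kernelOp μ hK) :=
  have ⟨_, b, _⟩ := exists_hilbertBasis ℂ (Lp ℂ 2 μ)
  isCompactOperator_of_summable_norm_sq b (summable_norm_sq_kernelOp hK b.orthonormal)

end Operator

section SpectralRadius

variable {μ : Measure Ω} {K : Ω → Ω → ℝ} {τ : ℂ}

/-- `f` is a square-integrable real eigenfunction of the integral operator `T_K` for the
eigenvalue `c`. -/
def IsLeftEigenfunction (μ : Measure Ω) (K : Ω → Ω → ℝ) (f : Ω → ℝ) (c : ℝ) : Prop :=
  ¬f =ᵐ[μ] 0 ∧ MemLp f 2 μ ∧ ∀ᵐ x ∂μ, ∫ y, f y * K y x ∂μ = c * f x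

/-- `f` is a square-integrable real eigenfunction of the integral operator of the transpose of
`K` for the eigenvalue `c`. -/
def IsRightEigenfunction (μ : Measure Ω) (K : Ω → Ω → ℝ) (f : Ω → ℝ) (c : ℝ) : Prop :=
  ¬f =ᵐ[μ] 0 ∧ MemLp f 2 μ ∧ ∀ᵐ x ∂μ, ∫ y, K x y * f y ∂μ = c * f x

lemma isEigenvalue_iff_kernelApply :
    IsEigenvalue μ K τ ↔
      ∃ f : Ω → ℂ, MemLp f 2 μ ∧ ¬f =ᵐ[μ] 0 ∧ kernelApply μ K f =ᵐ[μ] τ • f := by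
  simp only [IsEigenvalue, kernelApply, EventuallyEq, Complex.real_smul, mul_comm, Pi.smul_apply,
    smul_eq_mul]

lemma isLeftEigenfunction_iff_kernelApply {f : Ω → ℝ} {c : ℝ} :
    IsLeftEigenfunction μ K f c ↔ ¬f =ᵐ[μ] 0 ∧ MemLp f 2 μ ∧ kernelApply μ K f =ᵐ[μ] c • f := by
  simp only [IsLeftEigenfunction, kernelApply, EventuallyEq, smul_eq_mul, mul_comm,
    Pi.smul_apply]

lemma isRightEigenfunction_iff_swap {f : Ω → ℝ} {c : ℝ} :
    IsRightEigenfunction μ K f c ↔ IsLeftEigenfunction μ (Function.swap K) f c := by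
  simp only [IsRightEigenfunction, IsLeftEigenfunction, Function.swap, mul_comm]

lemma IsLeftEigenfunction.isEigenvalue {f : Ω → ℝ} {c : ℝ} (h : IsLeftEigenfunction μ K f c) :
    IsEigenvalue μ K (c : ℂ) := by
  obtain ⟨hf0, hf, hc⟩ := h
  refine ⟨fun x => (f x : ℂ), hf.ofReal, fun hzero => hf0 ?_, ?_⟩
  · exact hzero.mono fun x hx => Complex.ofReal_eq_zero.1 hx
  · filter_upwards [hc] with x hx
    exact_mod_cast congrArg Complex.ofReal hx

lemma specRad_nonneg : 0 ≤ specRad μ K :=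
  Real.sSup_nonneg' ⟨0, mem_insert _ _, le_rfl⟩

lemma specRad_le {b : ℝ} (hb : 0 ≤ b) (h : ∀ τ, IsEigenvalue μ K τ → ‖τ‖ ≤ b) :
    specRad μ K ≤ b :=
  csSup_le (insert_nonempty _ _) (forall_mem_insert.2 ⟨hb, fun _ ⟨τ, hτ, hr⟩ => hr ▸ h τ hτ⟩)

variable [IsFiniteMeasure μ]

lemma isEigenvalue_iff_hasEigenvalue (hK : IsBoundedKernel K) :
    IsEigenvalue μ K τ ↔
      Module.End.HasEigenvalue (kernelOp μ hK : Module.End ℂ (Lp ℂ 2 μ)) τ := by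
  rw [isEigenvalue_iff_kernelApply]
  constructor
  · rintro ⟨f, hf, hf0, hfτ⟩
    refine Module.End.hasEigenvalue_of_hasEigenvector (x := hf.toLp)
      ⟨Module.End.mem_eigenspace_iff.2 (Lp.ext ?_), fun h0 => hf0 ?_⟩
    · filter_upwards [kernelOp_coeFn hK hf.toLp, hf.coeFn_toLp, Lp.coeFn_smul τ hf.toLp, hfτ]
        with x hx hfx hsmul hτx
      rw [ContinuousLinearMap.coe_coe, hx, kernelApply_congr_ae hf.coeFn_toLp, hτx, hsmul,
        Pi.smul_apply, Pi.smul_apply, hfx]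
    · exact hf.coeFn_toLp.symm.trans (h0 ▸ Lp.coeFn_zero ℂ 2 μ)
  · intro h
    obtain ⟨f, hf⟩ := h.exists_hasEigenvector
    refine ⟨f, Lp.memLp f, fun h0 => hf.2 ((Lp.eq_zero_iff_ae_eq_zero).2 h0), ?_⟩
    have hτf : kernelOp μ hK f = τ • f := hf.apply_eq_smul
    exact (kernelOp_coeFn hK f).symm.trans (hτf ▸ Lp.coeFn_smul τ f)

lemma norm_le_specRad (hK : IsBoundedKernel K) (hτ : IsEigenvalue μ K τ) :
    ‖τ‖ ≤ specRad μ K := by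
  refine le_csSup ⟨‖kernelOp μ hK‖, forall_mem_insert.2 ⟨norm_nonneg _, ?_⟩⟩ (.inr ⟨τ, hτ, rfl⟩)
  rintro _ ⟨σ, hσ, rfl⟩
  obtain ⟨f, hf⟩ := ((isEigenvalue_iff_hasEigenvalue hK).1 hσ).exists_hasEigenvector
  refine le_of_mul_le_mul_right ?_ (norm_pos_iff.2 hf.2)
  rw [← norm_smul, ← hf.apply_eq_smul]
  exact (kernelOp μ hK).le_opNorm f

lemma norm_le_specRad_pow (hK : IsBoundedKernel K) {n : ℕ} (hn : 1 ≤ n)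
    (hτ : IsEigenvalue μ (dpow μ K n) τ) : ‖τ‖ ≤ specRad μ K ^ n := by
  rcases eq_or_ne τ 0 with rfl | hτ0
  · simpa using pow_nonneg specRad_nonneg n
  rw [isEigenvalue_iff_hasEigenvalue (hK.dpow hn), kernelOp_dpow hK hn] at hτ
  obtain ⟨σ, hσ, rfl⟩ :=
    exists_hasEigenvalue_pow_eq (isCompactOperator_kernelOp hK) (Nat.one_le_iff_ne_zero.1 hn) hτ0 hτ
  rw [norm_pow]
  gcongr
  exact norm_le_specRad hK ((isEigenvalue_iff_hasEigenvalue hK).2 hσ)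

lemma specRad_dpow_le (hK : IsBoundedKernel K) {n : ℕ} (hn : 1 ≤ n) :
    specRad μ (dpow μ K n) ≤ specRad μ K ^ n :=
  specRad_le (pow_nonneg specRad_nonneg n) fun _ => norm_le_specRad_pow hK hn

lemma IsLeftEigenfunction.periphMult_ne_zero (hK : IsBoundedKernel K) {f : Ω → ℝ}
    (hf : IsLeftEigenfunction μ K f (specRad μ K)) : periphMult μ K ≠ 0 := by
  have hnorm : ‖(specRad μ K : ℂ)‖ = specRad μ K := by
    rw [Complex.norm_real, Real.norm_of_nonneg specRad_nonneg]
  refine ncard_ne_zero_of_mem ⟨hf.isEigenvalue, hnorm⟩ ?_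
  rcases (specRad_nonneg (μ := μ) (K := K)).eq_or_lt with h0 | hpos
  · exact (finite_singleton 0).subset fun σ hσ => norm_eq_zero.1 (hσ.2.trans h0.symm)
  · exact (finite_setOf_hasEigenvalue_le_norm (T := kernelOp μ hK)
      (fun _ he => summable_norm_sq_kernelOp hK he) hpos).subset
        fun σ hσ => ⟨(isEigenvalue_iff_hasEigenvalue hK).1 hσ.1, hσ.2.ge⟩

end SpectralRadius

section LeadsTo

/-- Almost every edge of `K` that starts in `A` ends in `B`. Periodicity witnesses and unions of
strong components are described in these terms. -/
def LeadsTo (μ : Measure Ω) (K : Ω → Ω → ℝ) (A B : Set Ω) : Prop :=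
  ∀ᵐ p ∂μ.prod μ, p.1 ∈ A → p.2 ∉ B → K p.1 p.2 = 0

variable {μ : Measure Ω} {K L : Ω → Ω → ℝ}

namespace IsPeriodicityWitness

variable {d : ℕ} {P : ZMod d → Set Ω}

lemma leadsTo (hP : IsPeriodicityWitness μ K P) (j : ZMod d) :
    LeadsTo μ K (P j) (P (j + 1)) := by
  simpa only [LeadsTo, ae_iff, Classical.not_imp] using hP.2.2.2 j

lemma leadsTo_compl [NeZero d] (hP : IsPeriodicityWitness μ K P) (j : ZMod d) :
    LeadsTo μ K (P j)ᶜ (P (j + 1))ᶜ := by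
  filter_upwards [ae_all_iff.2 hP.leadsTo] with p hp h₁ h₂
  obtain ⟨i, hi⟩ := mem_iUnion.1 (hP.2.2.1 ▸ mem_univ p.1)
  have hij : i + 1 ≠ j + 1 := fun h => h₁ (add_right_cancel h ▸ hi)
  exact hp i hi fun h => (hP.2.1 hij).le_bot ⟨h, not_not.1 h₂⟩

end IsPeriodicityWitness

variable [SFinite μ] {A B C : Set Ω}

protected lemma LeadsTo.swap (h : LeadsTo μ K A B) : LeadsTo μ (Function.swap K) Bᶜ Aᶜ := by
  have hswap : ∀ᵐ p ∂μ.prod μ, p.swap.1 ∈ A → p.swap.2 ∉ B → K p.swap.1 p.swap.2 = 0 :=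
    (Measure.measurePreserving_swap (μ := μ) (ν := μ)).quasiMeasurePreserving.ae h
  exact hswap.mono fun p hp hB hA => hp (not_not.1 hA) hB

lemma IsPeriodicityWitness.swap {d : ℕ} [NeZero d] {P : ZMod d → Set Ω}
    (hP : IsPeriodicityWitness μ K P) :
    IsPeriodicityWitness μ (Function.swap K) fun j => P (-j) := by
  refine ⟨fun j => hP.1 (-j), hP.2.1.comp_of_injective neg_injective,
    (neg_surjective.iUnion_comp P).trans hP.2.2.1, fun j => ?_⟩
  have hj := (hP.leadsTo_compl (-(j + 1))).swap
  rw [compl_compl, compl_compl, neg_add, neg_add_cancel_right, ← neg_add] at hj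
  simpa only [LeadsTo, ae_iff, Classical.not_imp] using hj

lemma LeadsTo.ae_ae_swap (h : LeadsTo μ K A B) :
    ∀ᵐ y ∂μ, ∀ᵐ x ∂μ, x ∈ A → y ∉ B → K x y = 0 := by
  filter_upwards [Measure.ae_ae_of_ae_prod h.swap] with y hy
  exact hy.mono fun x hx hxA hyB => hx hyB (not_not.2 hxA)

lemma LeadsTo.kernelComp (hK : LeadsTo μ K A B) (hL : LeadsTo μ L B C) :
    LeadsTo μ (kernelComp μ K L) A C := by
  have hrow : ∀ᵐ p ∂μ.prod μ, ∀ᵐ z ∂μ, p.1 ∈ A → z ∉ B → K p.1 z = 0 :=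
    Measure.quasiMeasurePreserving_fst.ae (Measure.ae_ae_of_ae_prod hK)
  have hcol : ∀ᵐ p ∂μ.prod μ, ∀ᵐ z ∂μ, z ∈ B → p.2 ∉ C → L z p.2 = 0 :=
    Measure.quasiMeasurePreserving_snd.ae hL.ae_ae_swap
  filter_upwards [hrow, hcol] with p hp₁ hp₂ hA hC
  refine integral_eq_zero_of_ae ?_
  filter_upwards [hp₁, hp₂] with z hz₁ hz₂
  by_cases hz : z ∈ B
  · exact mul_eq_zero_of_right _ (hz₂ hz hC)
  · exact mul_eq_zero_of_left (hz₁ hA hz) _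

lemma leadsTo_dpow_add {ι : Type*} [AddMonoidWithOne ι] {Q : ι → Set Ω}
    (h : ∀ j, LeadsTo μ K (Q j) (Q (j + 1))) {n : ℕ} (hn : 1 ≤ n) (j : ι) :
    LeadsTo μ (dpow μ K n) (Q j) (Q (j + n)) := by
  induction n, hn using Nat.le_induction generalizing j with
  | base => simpa only [Nat.cast_one, dpow_one] using h j
  | succ n hn ih =>
    rw [dpow_succ hn, add_comm n, Nat.cast_add, Nat.cast_one, ← add_assoc]
    exact (h j).kernelComp (ih (j + 1))

lemma LeadsTo.dpow (h : LeadsTo μ K A A) {n : ℕ} (hn : 1 ≤ n) : LeadsTo μ (dpow μ K n) A A :=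
  leadsTo_dpow_add (Q := fun _ : ℕ => A) (fun _ => h) hn 0

lemma leadsTo_dpow_self {d : ℕ} {Q : ZMod d → Set Ω} (h : ∀ j, LeadsTo μ K (Q j) (Q (j + 1)))
    (hd : 1 ≤ d) (j : ZMod d) : LeadsTo μ (dpow μ K d) (Q j) (Q j) := by
  simpa only [ZMod.natCast_self, add_zero] using leadsTo_dpow_add h hd j

end LeadsTo

section StrongComponents

variable {μ : Measure Ω} [IsFiniteMeasure μ] {K : Ω → Ω → ℝ} {A B X : Set Ω}

lemma IsBoundedKernel.integrableOn_prod (hK : IsBoundedKernel K) :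
    IntegrableOn (Function.uncurry K) (A ×ˢ B) (μ.prod μ) :=
  have ⟨C, hC⟩ := hK.bounded
  .of_bound (measure_lt_top _ _) hK.measurable.aestronglyMeasurable C (.of_forall fun _ => hC _ _)

lemma IsBoundedKernel.setIntegral_setIntegral (hK : IsBoundedKernel K) :
    ∫ x in A, ∫ y in B, K x y ∂μ ∂μ = ∫ p in A ×ˢ B, Function.uncurry K p ∂μ.prod μ :=
  (setIntegral_prod _ hK.integrableOn_prod).symm

lemma LeadsTo.setIntegral_eq_zero (hK : IsBoundedKernel K) (h : LeadsTo μ K A Bᶜ) :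
    ∫ x in A, ∫ y in B, K x y ∂μ ∂μ = 0 := by
  rw [hK.setIntegral_setIntegral]
  exact setIntegral_eq_zero_of_ae_eq_zero (h.mono fun p hp hpAB => hp hpAB.1 (not_not.2 hpAB.2))

lemma leadsTo_of_setIntegral_eq_zero (hK : IsBoundedKernel K) (hK0 : ∀ x y, 0 ≤ K x y)
    (hA : MeasurableSet A) (hB : MeasurableSet B)
    (h : ∫ x in A, ∫ y in B, K x y ∂μ ∂μ = 0) : LeadsTo μ K A Bᶜ := by
  rw [hK.setIntegral_setIntegral,
    setIntegral_eq_zero_iff_of_nonneg_ae (f := Function.uncurry K) (.of_forall fun _ => hK0 _ _)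
      hK.integrableOn_prod] at h
  filter_upwards [(ae_restrict_iff' (hA.prod hB)).1 h] with p hp h₁ h₂
  exact hp ⟨h₁, not_not.1 h₂⟩

lemma StronglyConnectedIn.null_or_null_of_leadsTo {Y : Set Ω} (hY : StronglyConnectedIn μ K Y)
    (hK : IsBoundedKernel K) (hA : MeasurableSet A) (h : LeadsTo μ K A A) :
    μ (A ∩ Y) = 0 ∨ μ (Y \ A) = 0 := by
  by_contra! hne
  refine (hY.2.2 (A ∩ Y) (Y \ A) (hA.inter hY.1) (hY.1.diff hA) ?_ ?_
    (pos_iff_ne_zero.2 hne.1) (pos_iff_ne_zero.2 hne.2)).ne' ?_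
  · rw [inter_comm, inter_union_sdiff]
  · exact disjoint_sdiff_right.mono_left inter_subset_left
  · exact LeadsTo.setIntegral_eq_zero hK
      (h.mono fun p hp h₁ h₂ => hp h₁.1 (not_not.1 h₂).2)

/-- The powers of `K` are eventually positive at almost every point of `X × X`; for the adjacency
matrix of a finite digraph this says that the matrix is primitive on `X`. -/
def EventuallyPositiveOn (μ : Measure Ω) (K : Ω → Ω → ℝ) (X : Set Ω) : Prop :=
  ∀ᵐ p ∂μ.prod μ, p.1 ∈ X → p.2 ∈ X → ∀ᶠ n in atTop, 0 < dpow μ K n p.1 p.2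

namespace EventuallyPositiveOn

lemma null_or_null_of_frequently_leadsTo (h : EventuallyPositiveOn μ K X) (hA : A ⊆ X)
    (hB : B ⊆ X) (hAB : ∃ᶠ n in atTop, LeadsTo μ (dpow μ K n) A Bᶜ) : μ A = 0 ∨ μ B = 0 := by
  rw [← mul_eq_zero, ← Measure.prod_prod]
  have hall : ∀ᵐ p ∂μ.prod μ, ∀ n : {n // LeadsTo μ (dpow μ K n) A Bᶜ},
      p.1 ∈ A → p.2 ∉ Bᶜ → dpow μ K n p.1 p.2 = 0 := ae_all_iff.2 Subtype.prop
  refine measure_eq_zero_iff_ae_notMem.2 ?_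
  filter_upwards [h, hall] with p hp hp0 hmem
  obtain ⟨n, hn, hpos⟩ := (hAB.and_eventually (hp (hA hmem.1) (hB hmem.2))).exists
  exact hpos.ne' (hp0 ⟨n, hn⟩ hmem.1 (not_not.2 hmem.2))

lemma stronglyConnectedIn (h : EventuallyPositiveOn μ K X) (hK : IsBoundedKernel K)
    (hK0 : ∀ x y, 0 ≤ K x y) (hX : MeasurableSet X) (hX0 : μ X ≠ 0) (hXX : LeadsTo μ K X X) :
    StronglyConnectedIn μ K X := by
  refine ⟨hX, pos_iff_ne_zero.2 hX0, ?_⟩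
  rintro A B hA hB rfl hdisj hA0 hB0
  refine (setIntegral_nonneg hA fun x _ => integral_nonneg (hK0 x)).lt_of_ne' fun hAB => ?_
  have hAA : LeadsTo μ K A A := by
    filter_upwards [hXX, leadsTo_of_setIntegral_eq_zero hK hK0 hA hB hAB] with p hp hp' h₁ h₂
    by_cases hpB : p.2 ∈ B
    · exact hp' h₁ (not_not.2 hpB)
    · exact hp (.inl h₁) (not_or.2 ⟨h₂, hpB⟩)
  have hpow : ∀ᶠ n in atTop, LeadsTo μ (dpow μ K n) A Bᶜ :=
    (eventually_ge_atTop 1).mono fun n hn => (hAA.dpow hn).mono fun p hp h₁ h₂ =>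
      hp h₁ (disjoint_right.1 hdisj (not_not.1 h₂))
  exact (h.null_or_null_of_frequently_leadsTo subset_union_left subset_union_right
    hpow.frequently).elim hA0.ne' hB0.ne'

lemma strongComponent (h : EventuallyPositiveOn μ K X) (hK : IsBoundedKernel K)
    (hK0 : ∀ x y, 0 ≤ K x y) (hX : MeasurableSet X) (hX0 : μ X ≠ 0) (hXX : LeadsTo μ K X X) :
    StrongComponent μ K X :=
  ⟨h.stronglyConnectedIn hK hK0 hX hX0 hXX, fun _ _ hXY hYX hY =>
    (hY.null_or_null_of_leadsTo hK hX hXX).elim hXY.ne' hYX.ne'⟩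

lemma null_of_leadsTo_add_one {d : ℕ} (h : EventuallyPositiveOn μ K X) (hd : d ≠ 1)
    {Q : ZMod d → Set Ω} (hQ : Pairwise (Function.onFun Disjoint Q)) (hQX : ∀ j, Q j ⊆ X)
    (hQK : ∀ j, LeadsTo μ K (Q j) (Q (j + 1))) (j : ZMod d) : μ (Q j) = 0 := by
  have := ZMod.nontrivial_iff.2 hd
  have hshift : ∃ᶠ n : ℕ in atTop, 1 ≤ n ∧ (n : ZMod d) ≠ 0 := by
    refine frequently_atTop.2 fun a => ?_
    by_cases ha : ((a + 1 : ℕ) : ZMod d) = 0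
    · exact ⟨a + 1 + 1, by omega, by omega, by rw [Nat.cast_succ, ha, zero_add]; exact one_ne_zero⟩
    · exact ⟨a + 1, by omega, by omega, ha⟩
  refine or_self_iff.1 (h.null_or_null_of_frequently_leadsTo (hQX j) (hQX j) (hshift.mono ?_))
  rintro n ⟨hn, hn0⟩
  have hjn : Disjoint (Q j) (Q (j + n)) := hQ fun hj => hn0 (left_eq_add.1 hj)
  exact (leadsTo_dpow_add hQK hn j).mono fun p hp h₁ h₂ =>
    hp h₁ (disjoint_left.1 hjn (not_not.1 h₂))

end EventuallyPositiveOn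

end StrongComponents

section SubMeasure

variable {μ : Measure Ω} {K : Ω → Ω → ℝ} {X : Set Ω}

lemma map_val_subMeasure (hX : MeasurableSet X) :
    (subMeasure μ X).map Subtype.val = (μ X)⁻¹ • μ.restrict X := by
  rw [subMeasure, Measure.map_smul, map_comap_subtype_coe hX]

lemma integral_subMeasure {E : Type*} [NormedAddCommGroup E] [NormedSpace ℝ E]
    (hX : MeasurableSet X) (f : Ω → E) :
    ∫ a, f a ∂subMeasure μ X = (μ.real X)⁻¹ • ∫ x in X, f x ∂μ := by
  rw [subMeasure, integral_smul_measure, integral_subtype_comap hX, ENNReal.toReal_inv,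
    measureReal_def]

lemma isFiniteMeasure_subMeasure (hX : MeasurableSet X) : IsFiniteMeasure (subMeasure μ X) := by
  refine ⟨?_⟩
  rw [subMeasure, Measure.smul_apply, comap_subtype_coe_apply hX, image_univ, Subtype.range_coe]
  exact (ENNReal.inv_mul_le_one _).trans_lt ENNReal.one_lt_top

lemma kernelApply_subKernel {E : Type*} [NormedAddCommGroup E] [NormedSpace ℝ E]
    (hX : MeasurableSet X) (f : Ω → E) (a : X) :
    kernelApply (subMeasure μ X) (subKernel K X) (fun b => f b) a =
      (μ.real X)⁻¹ • ∫ y in X, K y a • f y ∂μ :=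
  integral_subMeasure hX fun y => K y a • f y

lemma IsBoundedKernel.subKernel (hK : IsBoundedKernel K) : IsBoundedKernel (subKernel K X) :=
  ⟨hK.measurable.comp (measurable_subtype_coe.prodMap measurable_subtype_coe),
    hK.bounded.imp fun _ hC _ _ => hC _ _⟩

variable [IsFiniteMeasure μ]

lemma ae_subMeasure_iff (hX : MeasurableSet X) {p : Ω → Prop} :
    (∀ᵐ a : X ∂subMeasure μ X, p a) ↔ ∀ᵐ x ∂μ, x ∈ X → p x := by
  rw [← (MeasurableEmbedding.subtype_coe hX).ae_map_iff, map_val_subMeasure hX,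
    Measure.ae_ennreal_smul_measure_iff (ENNReal.inv_ne_zero.2 (measure_ne_top μ X)),
    ae_restrict_iff' hX]

lemma ae_prod_subMeasure_iff (hX : MeasurableSet X) {p : Ω × Ω → Prop} :
    (∀ᵐ q ∂(subMeasure μ X).prod (subMeasure μ X), p (↑q.1, ↑q.2)) ↔
      ∀ᵐ q ∂μ.prod μ, q ∈ X ×ˢ X → p q := by
  have hval := MeasurableEmbedding.subtype_coe hX
  have hinv : (μ X)⁻¹ ≠ 0 := ENNReal.inv_ne_zero.2 (measure_ne_top μ X)
  have hmap : ((subMeasure μ X).prod (subMeasure μ X)).map (Prod.map Subtype.val Subtype.val) =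
      (μ X)⁻¹ • (μ X)⁻¹ • (μ.prod μ).restrict (X ×ˢ X) := by
    have := isFiniteMeasure_subMeasure (μ := μ) hX
    rw [← Measure.map_prod_map _ _ measurable_subtype_coe measurable_subtype_coe,
      map_val_subMeasure hX, Measure.prod_smul_left, Measure.prod_smul_right,
      Measure.prod_restrict]
  have hae : ae (((subMeasure μ X).prod (subMeasure μ X)).map (Prod.map Subtype.val Subtype.val)) =
      ae ((μ.prod μ).restrict (X ×ˢ X)) := by
    rw [hmap, Measure.ae_ennreal_smul_measure_eq hinv, Measure.ae_ennreal_smul_measure_eq hinv]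
  rw [← ae_restrict_iff' (hX.prod hX), ← hae]
  exact (hval.prodMap hval).ae_map_iff.symm

lemma memLp_subMeasure_iff {E : Type*} [NormedAddCommGroup E] {p : ℝ≥0∞} (hX : MeasurableSet X)
    (hX0 : μ X ≠ 0) {f : Ω → E} :
    MemLp (fun a : X => f a) p (subMeasure μ X) ↔ MemLp f p (μ.restrict X) := by
  have hval := (MeasurableEmbedding.subtype_coe hX).memLp_map_measure_iff (g := f) (p := p)
    (μ := subMeasure μ X)
  rw [map_val_subMeasure hX] at hval
  refine ⟨fun h => ?_, fun h => hval.1 (h.smul_measure (ENNReal.inv_ne_top.2 hX0))⟩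
  simpa only [smul_smul, ENNReal.mul_inv_cancel hX0 (measure_ne_top μ X), one_smul]
    using (hval.2 h).smul_measure (measure_ne_top μ X)

lemma LeadsTo.image_val {A B : Set X} (hXX : LeadsTo μ K X X) (hX : MeasurableSet X)
    (h : LeadsTo (subMeasure μ X) (subKernel K X) A B) :
    LeadsTo μ K (Subtype.val '' A) (Subtype.val '' B) := by
  have hAB : ∀ᵐ q ∂(subMeasure μ X).prod (subMeasure μ X),
      (q.1 : Ω) ∈ Subtype.val '' A → (q.2 : Ω) ∉ Subtype.val '' B → K q.1 q.2 = 0 := by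
    filter_upwards [h] with q hq
    simpa only [Subtype.val_injective.mem_set_image, subKernel] using hq
  rw [ae_prod_subMeasure_iff hX
    (p := fun q => q.1 ∈ Subtype.val '' A → q.2 ∉ Subtype.val '' B → K q.1 q.2 = 0)] at hAB
  filter_upwards [hAB, hXX] with q hq hqX h₁ h₂
  have hq₁ : q.1 ∈ X := image_val_subset h₁
  by_cases hq₂ : q.2 ∈ X
  · exact hq ⟨hq₁, hq₂⟩ h₁ h₂
  · exact hqX hq₁ hq₂

lemma EventuallyPositiveOn.aperiodic_subKernel (h : EventuallyPositiveOn μ K X)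
    (hX : MeasurableSet X) (hX0 : μ X ≠ 0) (hXX : LeadsTo μ K X X) :
    Aperiodic (subMeasure μ X) (subKernel K X) := by
  rintro d hd ⟨Q, hQ⟩
  have : NeZero d := ⟨Nat.one_le_iff_ne_zero.1 hd⟩
  by_contra hd1
  have hnull := h.null_of_leadsTo_add_one hd1
    (hQ.2.1.mono fun _ _ hij => (disjoint_image_iff Subtype.val_injective).2 hij)
    (fun _ => image_val_subset) fun j => hXX.image_val hX (hQ.leadsTo j)
  refine hX0 ?_
  rw [← Subtype.range_coe (s := X), ← image_univ, ← hQ.2.2.1, image_iUnion]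
  exact measure_iUnion_null hnull

end SubMeasure

section Restriction

variable {μ : Measure Ω} [IsFiniteMeasure μ] {K : Ω → Ω → ℝ} {X : Set Ω}
  {E : Type*} [NormedAddCommGroup E] [NormedSpace ℝ E]

lemma kernelApply_subKernel_ae_eq (hX : MeasurableSet X) (hXX : LeadsTo μ K Xᶜ Xᶜ) {f : Ω → E}
    {c : ℝ} (h : kernelApply μ K f =ᵐ[μ] c • f) :
    kernelApply (subMeasure μ X) (subKernel K X) (fun a => f a) =ᵐ[subMeasure μ X]
      (c / μ.real X) • fun a : X => f a := by
  have hsub : ∀ᵐ a : X ∂subMeasure μ X,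
      (μ.real X)⁻¹ • ∫ y in X, K y a • f y ∂μ = (c / μ.real X) • f a := by
    rw [ae_subMeasure_iff hX (p := fun x =>
      (μ.real X)⁻¹ • ∫ y in X, K y x • f y ∂μ = (c / μ.real X) • f x)]
    filter_upwards [h, hXX.ae_ae_swap] with x hx hcol hxX
    rw [div_eq_inv_mul, mul_smul, setIntegral_eq_integral_of_ae_compl_eq_zero]
    · exact congrArg _ hx
    · filter_upwards [hcol] with y hy hyX
      rw [hy hyX (not_not.2 hxX), zero_smul]
  exact hsub.mono fun a ha => (kernelApply_subKernel hX f a).trans ha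

lemma IsEigenvalue.of_subKernel (hX : MeasurableSet X) (hX0 : μ X ≠ 0) (hXX : LeadsTo μ K X X)
    {τ : ℂ} (h : IsEigenvalue (subMeasure μ X) (subKernel K X) τ) :
    IsEigenvalue μ K (μ.real X * τ) := by
  obtain ⟨f, hf, hf0, hτ⟩ := isEigenvalue_iff_kernelApply.1 h
  obtain ⟨F, rfl, hF⟩ : ∃ F : Ω → ℂ, (fun a : X => F a) = f ∧ ∀ x ∉ X, F x = 0 :=
    ⟨Function.extend Subtype.val f 0,
      funext fun a => Subtype.val_injective.extend_apply f (0 : Ω → ℂ) a,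
      fun x hx => Function.extend_apply' f (0 : Ω → ℂ) x fun ⟨a, ha⟩ => hx (ha ▸ a.2)⟩
  refine isEigenvalue_iff_kernelApply.2 ⟨F, ?_, fun h0 => hf0 ?_, ?_⟩
  · rw [← indicator_eq_self.2 (Function.support_subset_iff'.2 hF)]
    exact (memLp_indicator_iff_restrict hX).2 ((memLp_subMeasure_iff hX hX0).1 hf)
  · exact (ae_subMeasure_iff hX (p := fun x => F x = 0)).2 (h0.mono fun x hx _ => hx)
  · have hsub : ∀ᵐ x ∂μ, x ∈ X → (μ.real X)⁻¹ • ∫ y in X, K y x • F y ∂μ = τ * F x :=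
      (ae_subMeasure_iff hX).1 (hτ.mono fun a ha => (kernelApply_subKernel hX F a).symm.trans ha)
    filter_upwards [hsub, hXX.ae_ae_swap] with x hx hcol
    by_cases hxX : x ∈ X
    · have hμX : μ.real X ≠ 0 := (measureReal_ne_zero_iff).2 hX0
      rw [Pi.smul_apply, smul_eq_mul, mul_assoc, ← hx hxX, ← Complex.real_smul,
        smul_inv_smul₀ hμX, kernelApply, setIntegral_eq_integral_of_forall_compl_eq_zero]
      exact fun y hy => by rw [hF y hy, smul_zero]
    · rw [Pi.smul_apply, hF x hxX, smul_zero]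
      refine integral_eq_zero_of_ae (hcol.mono fun y hy => ?_)
      by_cases hyX : y ∈ X
      · simp only [hy hyX hxX, zero_smul, Pi.zero_apply]
      · simp only [hF y hyX, smul_zero, Pi.zero_apply]

end Restriction

section Vanishing

variable {μ : Measure Ω} [SFinite μ] {K : Ω → Ω → ℝ}
  {E : Type*} [NormedAddCommGroup E] [NormedSpace ℝ E] {f : Ω → E} {c : ℝ}

lemma LeadsTo.ae_eq_zero_of_kernelApply_ae_eq {A B : Set Ω} (hK : LeadsTo μ K Aᶜ Bᶜ) (hc : c ≠ 0)
    (h : kernelApply μ K f =ᵐ[μ] c • f) (hA : ∀ᵐ x ∂μ, x ∈ A → f x = 0) :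
    ∀ᵐ x ∂μ, x ∈ B → f x = 0 := by
  filter_upwards [h, hK.ae_ae_swap] with x hx hcol hxB
  have hzero : kernelApply μ K f x = 0 := by
    refine integral_eq_zero_of_ae ?_
    filter_upwards [hcol, hA] with y hy hyA
    by_cases hyA' : y ∈ A
    · rw [hyA hyA', smul_zero, Pi.zero_apply]
    · rw [hy hyA' (not_not.2 hxB), zero_smul, Pi.zero_apply]
  exact (smul_eq_zero.1 (hx.symm.trans hzero)).resolve_left hc

lemma IsPeriodicityWitness.not_forall_ae_mem_eq_zero {d : ℕ} [NeZero d] {P : ZMod d → Set Ω}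
    (hP : IsPeriodicityWitness μ K P) (hc : c ≠ 0) (h : kernelApply μ K f =ᵐ[μ] c • f)
    (hf : ¬f =ᵐ[μ] 0) (i : ZMod d) : ¬∀ᵐ x ∂μ, x ∈ P i → f x = 0 := by
  intro hi
  have hall (n : ℕ) : ∀ᵐ x ∂μ, x ∈ P (i + n) → f x = 0 := by
    induction n with
    | zero => simpa only [Nat.cast_zero, add_zero] using hi
    | succ n ih =>
      rw [Nat.cast_add_one, ← add_assoc]
      exact (hP.leadsTo_compl _).ae_eq_zero_of_kernelApply_ae_eq hc h ih
  refine hf ?_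
  filter_upwards [ae_all_iff.2 hall] with x hx
  obtain ⟨j, hj⟩ := mem_iUnion.1 (hP.2.2.1 ▸ mem_univ x)
  exact hx (j - i).val (by rwa [ZMod.natCast_zmod_val, add_sub_cancel])

end Vanishing

section PositiveSpectralRadius

section Measure

variable {α : Type*} [MeasurableSpace α] {ν : Measure α}

lemma exists_measure_setOf_le_lt [IsFiniteMeasure ν] {f : ℕ → α → ℝ} (hf : ∀ n, Measurable (f n))
    (h : ∀ᵐ x ∂ν, ∀ᶠ n in atTop, 0 < f n x) {ε : ℝ≥0∞} (hε : 0 < ε) :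
    ∃ n, ∃ c > 0, ν {x | f n x ≤ c} < ε := by
  have hlim : Tendsto (fun n => ν {x | f n x ≤ 0}) atTop (𝓝 (ν ∅)) := by
    refine tendsto_measure_of_ae_tendsto_indicator_of_isFiniteMeasure atTop .empty
      (fun n => measurableSet_le (hf n) measurable_const)
      (h.mono fun x hx => hx.mono fun n hn => ?_)
    exact iff_of_false (not_le.2 hn) (notMem_empty x)
  obtain ⟨n, hn⟩ := (hlim.eventually_lt_const (measure_empty (μ := ν) ▸ hε)).exists
  have hInter : ⋂ c > 0, {x | f n x ≤ c} = {x | f n x ≤ 0} := by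
    ext x
    simp only [mem_iInter, Set.mem_ofPred_eq]
    exact ⟨le_of_forall_gt_imp_ge_of_dense, fun hx c hc => hx.trans hc.le⟩
  have hright : Tendsto (fun c => ν {x | f n x ≤ c}) (𝓝[>] 0) (𝓝 (ν {x | f n x ≤ 0})) := by
    rw [← hInter]
    exact tendsto_measure_biInter_gt
      (fun c _ => (measurableSet_le (hf n) measurable_const).nullMeasurableSet)
      (fun _ _ _ hij x hx => le_trans hx hij) ⟨1, one_pos, measure_ne_top _ _⟩
  obtain ⟨c, hc, hc0⟩ := ((hright.eventually_lt_const hn).and self_mem_nhdsWithin).exists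
  exact ⟨n, c, hc0, hc⟩

lemma exists_measure_compl_lt_and_forall_measure_lt [SFinite ν] {R : Set (α × α)}
    (hR : MeasurableSet R) {ε : ℝ≥0∞} (h : ν.prod ν R < ε * ε) :
    ∃ A, MeasurableSet A ∧ ν Aᶜ < ε ∧ ∀ x ∈ A, ν {y | (y, x) ∈ R} < ε := by
  have hmeas : Measurable fun x => ν {y | (y, x) ∈ R} := measurable_measure_prodMk_right hR
  refine ⟨{x | ν {y | (y, x) ∈ R} < ε}, measurableSet_lt hmeas measurable_const, ?_, fun _ h => h⟩
  have hmarkov : ε * ν {x | ε ≤ ν {y | (y, x) ∈ R}} ≤ ν.prod ν R :=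
    (mul_meas_ge_le_lintegral hmeas ε).trans_eq (Measure.prod_apply_symm hR).symm
  simpa only [Set.compl_ofPred, not_lt] using lt_of_mul_lt_mul_left' (hmarkov.trans_lt h)

end Measure

variable {μ : Measure Ω} [IsFiniteMeasure μ] {K : Ω → Ω → ℝ}

lemma IsBoundedKernel.exists_pos_forall_mem_le_setIntegral (hK : IsBoundedKernel K)
    (hK0 : ∀ x y, 0 ≤ K x y) {c : ℝ} (hc : 0 < c) {ε : ℝ≥0∞} (hε : ε + ε < μ univ)
    (h : μ.prod μ {p | K p.1 p.2 ≤ c} < ε * ε) :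
    ∃ A, MeasurableSet A ∧ μ A ≠ 0 ∧ ∃ δ > 0, ∀ x ∈ A, δ ≤ ∫ y in A, K y x ∂μ := by
  obtain ⟨A, hA, hAc, hcol⟩ := exists_measure_compl_lt_and_forall_measure_lt
    (measurableSet_le hK.measurable measurable_const) h
  refine ⟨A, hA, fun hA0 => ?_, c * (μ univ - (ε + ε)).toReal,
    mul_pos hc (ENNReal.toReal_pos (tsub_pos_of_lt hε).ne' (by finiteness)), fun x hx => ?_⟩
  · refine hε.not_ge ((measure_add_measure_compl hA).symm.trans_le ?_)
    exact add_le_add (hA0.trans_le zero_le) hAc.le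
  have hcover : univ ⊆ Aᶜ ∪ {y | K y x ≤ c} ∪ {y | c ≤ K y x} ∩ A := fun y _ => by
    simp only [mem_union, mem_compl_iff, mem_inter_iff, Set.mem_ofPred_eq]
    grind
  have hlarge : μ univ - (ε + ε) ≤ (μ.restrict A) {y | c ≤ K y x} := by
    rw [Measure.restrict_apply (measurableSet_le measurable_const (hK.measurable_left x)),
      tsub_le_iff_left]
    calc μ univ ≤ μ Aᶜ + μ {y | K y x ≤ c} + μ ({y | c ≤ K y x} ∩ A) :=
          (measure_mono hcover).trans
            ((measure_union_le _ _).trans (add_le_add_left (measure_union_le _ _) _))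
      _ ≤ ε + ε + μ ({y | c ≤ K y x} ∩ A) := by
          gcongr
          exact (hcol x hx).le
  calc c * (μ univ - (ε + ε)).toReal
      ≤ c * (μ.restrict A).real {y | c ≤ K y x} :=
        mul_le_mul_of_nonneg_left (ENNReal.toReal_mono (measure_ne_top _ _) hlarge) hc.le
    _ ≤ ∫ y in A, K y x ∂μ :=
        mul_meas_ge_le_integral_of_nonneg (.of_forall fun y => hK0 y x)
          (hK.swap.integrable_right x).integrableOn c

lemma kernelApply_le_re_kernelOp (hK : IsBoundedKernel K) (hK0 : ∀ x y, 0 ≤ K x y) {u : Ω → ℝ}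
    (hu : Integrable u μ) {f : Lp ℂ 2 μ} (h : ∀ᵐ x ∂μ, u x ≤ (f x).re) :
    ∀ᵐ x ∂μ, kernelApply μ K u x ≤ (kernelOp μ hK f x).re := by
  filter_upwards [kernelOp_coeFn hK f] with x hx
  have hf : Integrable (fun y => K y x • f y) μ :=
    hK.integrable_smul ((Lp.memLp f).integrable one_le_two) x
  have hre : (∫ y, K y x • f y ∂μ).re = ∫ y, K y x • (f y).re ∂μ := by
    simpa only [RCLike.re_eq_complex_re, Complex.smul_re] using (integral_re hf).symm
  rw [hx, kernelApply, kernelApply, hre]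
  refine integral_mono_ae (hK.integrable_smul hu x) ?_
    (h.mono fun y hy => smul_le_smul_of_nonneg_left hy (hK0 y x))
  simpa only [RCLike.re_eq_complex_re, Complex.smul_re] using hf.re

lemma le_re_kernelOp_pow_indicatorConstLp (hK : IsBoundedKernel K) (hK0 : ∀ x y, 0 ≤ K x y)
    {A : Set Ω} (hA : MeasurableSet A) {δ : ℝ} (hδ : 0 ≤ δ)
    (h : ∀ x ∈ A, δ ≤ ∫ y in A, K y x ∂μ) (k : ℕ) :
    ∀ᵐ x ∂μ, (δ ^ k • A.indicator 1) x ≤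
      ((kernelOp μ hK ^ k) (indicatorConstLp 2 hA (measure_ne_top μ A) 1) x).re := by
  induction k with
  | zero =>
    filter_upwards [indicatorConstLp_coeFn (p := 2) (hs := hA) (hμs := measure_ne_top μ A)
      (c := (1 : ℂ))] with x hx
    rw [pow_zero, pow_zero, one_smul, one_apply_eq_self, hx]
    by_cases hxA : x ∈ A <;> simp [hxA]
  | succ k ih =>
    have hind : Integrable (δ ^ k • A.indicator (1 : Ω → ℝ)) μ :=
      ((integrable_const 1).indicator hA).smul _
    filter_upwards [kernelApply_le_re_kernelOp hK hK0 hind ih] with x hx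
    rw [pow_succ' (kernelOp μ hK), mul_apply_eq_comp]
    refine le_trans ?_ hx
    have hval : kernelApply μ K (A.indicator (1 : Ω → ℝ)) x = ∫ y in A, K y x ∂μ := by
      rw [← integral_indicator hA]
      refine integral_congr_ae (.of_forall fun y => ?_)
      by_cases hyA : y ∈ A <;> simp [hyA]
    rw [kernelApply_const_smul, Pi.smul_apply, Pi.smul_apply, hval, pow_succ, mul_smul]
    gcongr
    by_cases hxA : x ∈ A
    · simpa [hxA] using h x hxA
    · simpa [hxA] using integral_nonneg fun y => hK0 y x

lemma exists_ne_zero_isEigenvalue_of_le_setIntegral (hK : IsBoundedKernel K)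
    (hK0 : ∀ x y, 0 ≤ K x y) {A : Set Ω} (hA : MeasurableSet A) (hA0 : μ A ≠ 0) {δ : ℝ}
    (hδ : 0 < δ) (h : ∀ x ∈ A, δ ≤ ∫ y in A, K y x ∂μ) :
    ∃ τ ≠ 0, IsEigenvalue μ K τ := by
  set g : Lp ℂ 2 μ := indicatorConstLp 2 hA (measure_ne_top μ A) 1 with hg
  have hg0 : g ≠ 0 := by
    rw [← norm_ne_zero_iff, hg, norm_indicatorConstLp two_ne_zero (by finiteness)]
    have hApos : 0 < μ.real A := ENNReal.toReal_pos hA0 (by finiteness)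
    exact mul_ne_zero (norm_ne_zero_iff.2 one_ne_zero) (Real.rpow_pos_of_pos hApos _).ne'
  simp only [isEigenvalue_iff_hasEigenvalue hK]
  refine exists_ne_zero_hasEigenvalue_of_pow_mul_norm_le (isCompactOperator_kernelOp hK) hg0 hδ
    fun k => ?_
  rw [← abs_of_pos (pow_pos hδ k), ← Real.norm_eq_abs, ← norm_smul]
  refine Lp.norm_le_norm_of_ae_le ?_
  filter_upwards [le_re_kernelOp_pow_indicatorConstLp hK hK0 hA hδ.le h k,
    Lp.coeFn_smul (δ ^ k) g, indicatorConstLp_coeFn (p := 2) (hs := hA)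
      (hμs := measure_ne_top μ A) (c := (1 : ℂ))] with x hx hsmul hind
  refine le_trans ?_ (hx.trans (Complex.re_le_norm _))
  rw [hsmul, Pi.smul_apply, hind, norm_smul, Real.norm_of_nonneg (pow_nonneg hδ.le k)]
  by_cases hxA : x ∈ A <;> simp [hxA]

lemma EventuallyPositiveOn.specRad_pos {X : Set Ω} (h : EventuallyPositiveOn μ K X)
    (hK : IsBoundedKernel K) (hK0 : ∀ x y, 0 ≤ K x y) (hX : MeasurableSet X) (hX0 : μ X ≠ 0) :
    0 < specRad μ K := by
  have hprod : ∀ᵐ p ∂(μ.restrict X).prod (μ.restrict X),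
      ∀ᶠ n in atTop, 0 < dpow μ K (n + 1) p.1 p.2 := by
    rw [Measure.prod_restrict, ae_restrict_iff' (hX.prod hX)]
    exact h.mono fun p hp hpX => (tendsto_add_atTop_nat 1).eventually (hp hpX.1 hpX.2)
  have hhalf : μ X / 2 / 2 + μ X / 2 / 2 < μ.restrict X univ := by
    rw [Measure.restrict_apply_univ, ENNReal.add_halves]
    exact ENNReal.half_lt_self hX0 (by finiteness)
  have hquarter : 0 < μ X / 2 / 2 := ENNReal.half_pos (ENNReal.half_pos hX0).ne'
  obtain ⟨n, c, hc, hlt⟩ := exists_measure_setOf_le_lt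
    (fun n => (hK.dpow (μ := μ) n.succ_pos).measurable) hprod
    (ENNReal.mul_pos hquarter.ne' hquarter.ne')
  have hKn : IsBoundedKernel (dpow μ K (n + 1)) := hK.dpow n.succ_pos
  have hKn0 := dpow_nonneg (μ := μ) hK0 n.succ_pos
  obtain ⟨A, hA, hA0, δ, hδ, hAδ⟩ := hKn.exists_pos_forall_mem_le_setIntegral hKn0 hc hhalf hlt
  rw [Measure.restrict_apply hA] at hA0
  simp only [Measure.restrict_restrict hA] at hAδ
  obtain ⟨τ, hτ0, hτ⟩ := exists_ne_zero_isEigenvalue_of_le_setIntegral hKn hKn0 (hA.inter hX) hA0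
    hδ fun x hx => hAδ x hx.1
  refine specRad_nonneg.lt_of_ne' fun h0 => ?_
  have hle := norm_le_specRad_pow hK n.succ_pos hτ
  rw [h0, zero_pow n.succ_ne_zero] at hle
  exact hτ0 (norm_le_zero_iff.1 hle)

end PositiveSpectralRadius

section CyclicClasses

variable {μ : Measure Ω} [IsFiniteMeasure μ] {K : Ω → Ω → ℝ} {v : Ω → ℝ} {c : ℝ} {d : ℕ} [NeZero d]
  {P : ZMod d → Set Ω}

lemma IsLeftEigenfunction.measure_ne_zero (hv : IsLeftEigenfunction μ K v c) (hc : c ≠ 0)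
    (hP : IsPeriodicityWitness μ K P) (i : ZMod d) : μ (P i) ≠ 0 := by
  obtain ⟨hv0, -, hKv⟩ := isLeftEigenfunction_iff_kernelApply.1 hv
  refine fun h0 => hP.not_forall_ae_mem_eq_zero hc hKv hv0 i ?_
  exact (measure_eq_zero_iff_ae_notMem.1 h0).mono fun x hx hxP => absurd hxP hx

lemma IsLeftEigenfunction.subKernel_dpow (hv : IsLeftEigenfunction μ K v c) (hc : c ≠ 0)
    (hK : IsBoundedKernel K) (hP : IsPeriodicityWitness μ K P) (i : ZMod d) :
    IsLeftEigenfunction (subMeasure μ (P i)) (subKernel (dpow μ K d) (P i)) (fun a => v a)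
      (c ^ d / μ.real (P i)) := by
  have hd : 1 ≤ d := NeZero.one_le
  have hi0 := hv.measure_ne_zero hc hP i
  obtain ⟨hv0, hv2, hKv⟩ := isLeftEigenfunction_iff_kernelApply.1 hv
  refine isLeftEigenfunction_iff_kernelApply.2 ⟨fun h0 => ?_, ?_, ?_⟩
  · exact hP.not_forall_ae_mem_eq_zero hc hKv hv0 i ((ae_subMeasure_iff (hP.1 i)).1 h0)
  · exact (memLp_subMeasure_iff (hP.1 i) hi0).2 (hv2.restrict _)
  · exact kernelApply_subKernel_ae_eq (hP.1 i) (leadsTo_dpow_self hP.leadsTo_compl hd i)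
      (kernelApply_dpow_ae_eq hK (hv2.integrable one_le_two) hKv hd)

lemma IsRightEigenfunction.subKernel_dpow (hv : IsRightEigenfunction μ K v c) (hc : c ≠ 0)
    (hK : IsBoundedKernel K) (hP : IsPeriodicityWitness μ K P) (i : ZMod d) :
    IsRightEigenfunction (subMeasure μ (P i)) (subKernel (dpow μ K d) (P i)) (fun a => v a)
      (c ^ d / μ.real (P i)) := by
  obtain ⟨j, rfl⟩ := neg_surjective i
  have hj := (isRightEigenfunction_iff_swap.1 hv).subKernel_dpow hc hK.swap hP.swap j
  rw [dpow_swap hK NeZero.one_le] at hj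
  exact isRightEigenfunction_iff_swap.2 hj

lemma specRad_subKernel_dpow (hK : IsBoundedKernel K) {n : ℕ} (hn : 1 ≤ n) {X : Set Ω}
    (hX : MeasurableSet X) (hX0 : μ X ≠ 0) (hXX : LeadsTo μ (dpow μ K n) X X) {f : X → ℝ}
    (hf : IsLeftEigenfunction (subMeasure μ X) (subKernel (dpow μ K n) X) f
      (specRad μ K ^ n / μ.real X)) :
    specRad (subMeasure μ X) (subKernel (dpow μ K n) X) = specRad μ K ^ n / μ.real X := by
  have hμX : 0 < μ.real X := ENNReal.toReal_pos hX0 (measure_ne_top μ X)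
  have hquot : 0 ≤ specRad μ K ^ n / μ.real X := div_nonneg (pow_nonneg specRad_nonneg n) hμX.le
  have := isFiniteMeasure_subMeasure (μ := μ) hX
  apply le_antisymm
  · refine specRad_le hquot fun τ hτ => (le_div_iff₀' hμX).2 ?_
    simpa only [norm_mul, Complex.norm_real, Real.norm_of_nonneg hμX.le] using
      norm_le_specRad_pow hK hn (hτ.of_subKernel hX hX0 hXX)
  · simpa only [Complex.norm_real, Real.norm_of_nonneg hquot] using
      norm_le_specRad (hK.dpow hn).subKernel hf.isEigenvalue

lemma eventuallyPositiveOn_dpow_of_evPeriodic (hK : IsBoundedKernel K) {X : Set Ω} {s : ℤ}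
    (hs : (d : ℤ) ∣ s)
    (h : ∀ᵐ p ∂μ.prod μ, p.1 ∈ X → p.2 ∈ X → EvPeriodic d s (reachSeq μ K p.1 p.2)) :
    EventuallyPositiveOn μ (dpow μ K d) X := by
  have hd : 1 ≤ d := NeZero.one_le
  filter_upwards [h] with p hp h₁ h₂
  obtain ⟨k, hk⟩ := (hp h₁ h₂).2
  filter_upwards [eventually_ge_atTop k, eventually_ge_atTop 1] with n hkn hn
  rw [dpow_dpow hK hd hn]
  refine ((hk (d * n) (hkn.trans (Nat.le_mul_of_pos_left n hd))).1 ?_).2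
  exact dvd_sub (by simp only [Nat.cast_mul, dvd_mul_right]) hs

lemma IsPeriodicityWitness.specRad_ne_zero (hP : IsPeriodicityWitness μ K P) (hμ : μ ≠ 0)
    (hK : IsBoundedKernel K) (hK0 : ∀ x y, 0 ≤ K x y)
    (hpos : ∀ i, EventuallyPositiveOn μ (dpow μ K d) (P i)) : specRad μ K ≠ 0 := by
  have hd : 1 ≤ d := NeZero.one_le
  obtain ⟨i, hi⟩ : ∃ i, μ (P i) ≠ 0 := by
    by_contra! hnull
    exact hμ (Measure.measure_univ_eq_zero.1 (hP.2.2.1 ▸ measure_iUnion_null hnull))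
  have hdpow : 0 < specRad μ (dpow μ K d) :=
    (hpos i).specRad_pos (hK.dpow hd) (dpow_nonneg hK0 hd) (hP.1 i) hi
  refine fun h0 => hdpow.not_ge ((specRad_dpow_le hK hd).trans_eq ?_)
  rw [h0, zero_pow (NeZero.ne d)]

end CyclicClasses

theorem power_of_periodic_digraphon_general
    {Ω : Type*} [MeasurableSpace Ω] (μ : Measure Ω) [IsFiniteMeasure μ]
    (Γ : Ω → Ω → ℝ) (hΓ : IsBoundedKernel Γ) (hΓ0 : ∀ x y, 0 ≤ Γ x y)
    (D : ℕ) [NeZero D] (P : ZMod D → Set Ω) (hP : IsPeriodicityWitness μ Γ P)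
    (hpos : ∀ i, EventuallyPositiveOn μ (dpow μ Γ D) (P i))
    (vL vR : Ω → ℝ) (hvL : IsLeftEigenfunction μ Γ vL (specRad μ Γ))
    (hvR : IsRightEigenfunction μ Γ vR (specRad μ Γ)) (i : ZMod D) :
    StrongComponent μ (dpow μ Γ D) (P i) ∧
      Aperiodic (subMeasure μ (P i)) (subKernel (dpow μ Γ D) (P i)) ∧
      specRad (subMeasure μ (P i)) (subKernel (dpow μ Γ D) (P i)) =
        specRad μ Γ ^ D / μ.real (P i) ∧
      IsLeftEigenfunction (subMeasure μ (P i)) (subKernel (dpow μ Γ D) (P i)) (fun a => vL a)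
        (specRad μ Γ ^ D / μ.real (P i)) ∧
      IsRightEigenfunction (subMeasure μ (P i)) (subKernel (dpow μ Γ D) (P i)) (fun a => vR a)
        (specRad μ Γ ^ D / μ.real (P i)) := by
  have hD : 1 ≤ D := NeZero.one_le
  have hΓD : IsBoundedKernel (dpow μ Γ D) := hΓ.dpow hD
  have hΓD0 := dpow_nonneg (μ := μ) hΓ0 hD
  have hii := leadsTo_dpow_self hP.leadsTo hD i
  have hμ : μ ≠ 0 := fun h0 => hvL.1 (by simp only [h0, EventuallyEq, ae_zero, eventually_bot])
  have hρ : specRad μ Γ ≠ 0 := hP.specRad_ne_zero hμ hΓ hΓ0 hpos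
  have hi0 := hvL.measure_ne_zero hρ hP i
  have hvLi := hvL.subKernel_dpow hρ hΓ hP i
  exact ⟨(hpos i).strongComponent hΓD hΓD0 (hP.1 i) hi0 hii,
    (hpos i).aperiodic_subKernel (hP.1 i) hi0 hii,
    specRad_subKernel_dpow hΓ hD (hP.1 i) hi0 hii hvLi, hvLi, hvR.subKernel_dpow hρ hΓ hP i⟩

/-- For a strongly connected digraphon `Γ` of peripheral multiplicity `D`
with cyclic classes `P₀,…,P_{D-1}`, the strong-component decomposition of `Γ^D` consists of
an empty fragmented set and exactly the components `P i`; each restricted digraphon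
`(Γ^D)↾(P i × P i)` (with the normalized measure) is aperiodic, has spectral radius
`ρ(Γ)^D / μ(P i)`, and the restrictions of `v_L` and `v_R` are its left and right
eigenfunctions for this eigenvalue. -/
theorem power_of_periodic_digraphon
    {Ω : Type*} [MeasurableSpace Ω] (μ : Measure Ω) [IsProbabilityMeasure μ]
    (Γ : Ω → Ω → ℝ) (hΓ : IsDigraphon Γ)
    (hconn : StronglyConnectedIn μ Γ Set.univ)
    (D : ℕ) (hD : periphMult μ Γ = D)
    (P : ZMod D → Set Ω) (hP : IsPeriodicityWitness μ Γ P)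
    (hPreach : ∀ i j : ZMod D, ∀ᵐ p : Ω × Ω ∂(μ.prod μ), p.1 ∈ P i → p.2 ∈ P j →
      EvPeriodic D ((j.val : ℤ) - (i.val : ℤ)) (reachSeq μ Γ p.1 p.2))
    (vL vR : Ω → ℝ)
    (hvL2 : MemLp vL 2 μ) (hvL0 : ¬(vL =ᵐ[μ] 0))
    (hvLeig : ∀ᵐ x ∂μ, ∫ y, vL y * Γ y x ∂μ = specRad μ Γ * vL x)
    (hvR2 : MemLp vR 2 μ) (hvR0 : ¬(vR =ᵐ[μ] 0))
    (hvReig : ∀ᵐ x ∂μ, ∫ y, Γ x y * vR y ∂μ = specRad μ Γ * vR x) :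
    ∀ i : ZMod D,
      StrongComponent μ (dpow μ Γ D) (P i) ∧
      Aperiodic (subMeasure μ (P i)) (subKernel (dpow μ Γ D) (P i)) ∧
      specRad (subMeasure μ (P i)) (subKernel (dpow μ Γ D) (P i))
        = specRad μ Γ ^ D / (μ (P i)).toReal ∧
      (¬((fun a : ↥(P i) => vL ↑a) =ᵐ[subMeasure μ (P i)] 0) ∧
        MemLp (fun a : ↥(P i) => vL ↑a) 2 (subMeasure μ (P i)) ∧
        ∀ᵐ a ∂(subMeasure μ (P i)),
          ∫ b, vL ↑b * subKernel (dpow μ Γ D) (P i) b a ∂(subMeasure μ (P i))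
            = (specRad μ Γ ^ D / (μ (P i)).toReal) * vL ↑a) ∧
      (¬((fun a : ↥(P i) => vR ↑a) =ᵐ[subMeasure μ (P i)] 0) ∧
        MemLp (fun a : ↥(P i) => vR ↑a) 2 (subMeasure μ (P i)) ∧
        ∀ᵐ a ∂(subMeasure μ (P i)),
          ∫ b, subKernel (dpow μ Γ D) (P i) a b * vR ↑b ∂(subMeasure μ (P i))
            = (specRad μ Γ ^ D / (μ (P i)).toReal) * vR ↑a) := by
  have hL : IsLeftEigenfunction μ Γ vL (specRad μ Γ) := ⟨hvL0, hvL2, hvLeig⟩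
  have : NeZero D := ⟨hD ▸ hL.periphMult_ne_zero hΓ.isBoundedKernel⟩
  exact power_of_periodic_digraphon_general μ Γ hΓ.isBoundedKernel (fun x y => (hΓ.2 x y).1) D P hP
    (fun i => eventuallyPositiveOn_dpow_of_evPeriodic hΓ.isBoundedKernel
      (by simp only [sub_self, dvd_zero]) (hPreach i i)) vL vR hL ⟨hvR0, hvR2, hvReig⟩

end Digraphon
end
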